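/- arXiv:1510.08373 — 7 statements merged into one kernel-verified Lean document; each statement's English description precedes it below -/
import Mathlib

section
/- Let H be a graph with chromatic number χ(H) = r ≥ 3 and H not isomorphic to the complete graph K_r. Then for every γ > 0 there exist δ > 0 and n₀ = n₀(H, γ) such that the following holds: if G is an H-free graph on n ≥ n₀ vertices with e(G) ≥ ex(n,H) − δn², then there exists a partition of V(G) into r−1 parts V₁, …, V_{r−1} such that the total number of edges inside parts satisfies Σᵢ e(Vᵢ) < γn². -/
/-!
Erdős–Simonovits stability, without the regularity lemma. Put `k = r - 1` and `t = |H|`.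

Since `H` is not `k`-colourable, its Turán density is at least `1 - 1/k` (`le_turanDensity`). A
near-extremal `H`-free graph `G` therefore has few vertices of degree below `(1 - 1/k - ε)n`
(`few_low_degree`), and the minimum-degree form of the Erdős–Stone theorem, applied to the remaining
vertices, yields a complete `k`-partite subgraph of `G` with parts of a large constant size `T`, all
of whose vertices have degree at least `(1 - 1/k - ε)n` (`exists_large_equipartite`).

Consider the links of the vertices of `G` in the `k` parts. Only boundedly many vertices have `t`
neighbours in every part, because `H` is `(k + 1)`-colourable and `G` is `H`-free
(`card_fully_joined_le`). Every other vertex has fewer than `t` neighbours in some part, and is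
assigned to that part. By the degree condition the average number of neighbours in the union of the
parts is close to `(k - 1)T`, so all but a few vertices are joined to almost all vertices of the
other `k - 1` parts (`card_deficient_le`). Among these vertices, a `K_{t,t}` inside one class would
extend by common neighbours in the other parts to a copy of `H` (`no_biclique`). As `K_{t,t}` has
Turán density `0` (`turanDensity_biclique`), each class spans few edges between its typical
vertices, and the exceptional vertices meet few edges in total.
-/

open SimpleGraph

section Defs

variable {V W : Type*}

/-- The set of edges of `G` with both endpoints in `S`. -/
def inEdges (G : SimpleGraph V) (S : Set V) : Set (Sym2 V) :=
  {e | e ∈ G.edgeSet ∧ ∀ v ∈ e, v ∈ S}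

/-- The number of edges of `G` with both endpoints in `S`. -/
noncomputable def edgesIn (G : SimpleGraph V) (S : Set V) : ℕ := (inEdges G S).ncard

/-- The set of edges of `G` with one endpoint in `S` and the other in `T`. -/
def crossEdges (G : SimpleGraph V) (S T : Set V) : Set (Sym2 V) :=
  {e | e ∈ G.edgeSet ∧ ∃ u ∈ S, ∃ v ∈ T, e = s(u, v)}

/-- The number of edges of `G` with one endpoint in `S` and the other in `T`. -/
noncomputable def edgesBetween (G : SimpleGraph V) (S T : Set V) : ℕ := (crossEdges G S T).ncard

/-- The matching number of a set of edges: the largest number of pairwise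
vertex-disjoint edges that can be chosen from `E`. -/
noncomputable def nuSet (E : Set (Sym2 V)) : ℕ :=
  sSup {m | ∃ M : Finset (Sym2 V), ↑M ⊆ E ∧
    (M : Set (Sym2 V)).Pairwise (fun e f => ∀ v, v ∈ e → v ∉ f) ∧ M.card = m}

/-- The matching number of a graph. -/
noncomputable def nu (G : SimpleGraph V) : ℕ := nuSet G.edgeSet

/-- `G` contains a subgraph isomorphic to `H`, i.e. there is an injective
graph homomorphism from `H` to `G`. -/
def ContainsCopy (H : SimpleGraph W) (G : SimpleGraph V) : Prop :=
  ∃ f : H →g G, Function.Injective f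

/-- The Turán number `ex(n, H)`: the maximum number of edges of an `H`-free
simple graph on `n` vertices. -/
noncomputable def exNum (n : ℕ) (H : SimpleGraph W) : ℕ :=
  sSup {m | ∃ G : SimpleGraph (Fin n), ¬ ContainsCopy H G ∧ G.edgeSet.ncard = m}

/-- Underlying relation of the graph `C_{k,q}`: the vertex `none` is the center,
and for each `i : Fin k` the vertices `(i, 0), …, (i, q-2)` together with the
center form a cycle of length `q`. -/
def CkqRel (k q : ℕ) : Option (Fin k × Fin (q - 1)) → Option (Fin k × Fin (q - 1)) → Prop
  | none, some (_, j) => (j : ℕ) = 0 ∨ (j : ℕ) = q - 2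
  | some (i, j), some (i', j') => i = i' ∧ (j' : ℕ) = (j : ℕ) + 1
  | _, _ => False

/-- The graph `C_{k,q}` on `k(q-1)+1` vertices consisting of `k` cycles of length `q`
intersecting in exactly one common vertex (the center). -/
def Ckq (k q : ℕ) : SimpleGraph (Option (Fin k × Fin (q - 1))) :=
  SimpleGraph.fromRel (CkqRel k q)

/-- The member of the family `𝓕_{n,k}`: the Turán graph `T_{n,2}` (with classes the
even- and odd-indexed vertices) together with the edges of a complete bipartite graph
`K_{k-1,k-1}` on the even vertices `0, 2, …, 2(2(k-1)-1)` added inside the even class. -/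
def Fgraph (n k : ℕ) : SimpleGraph (Fin n) :=
  SimpleGraph.fromRel (fun u v =>
    ((u : ℕ) % 2 ≠ (v : ℕ) % 2) ∨
    (∃ s t : ℕ, s < k - 1 ∧ k - 1 ≤ t ∧ t < 2 * (k - 1) ∧ (u : ℕ) = 2 * s ∧ (v : ℕ) = 2 * t))

/-- The maximum degree of the subgraph of `G` induced on `S`. -/
noncomputable def DeltaIn (G : SimpleGraph V) (S : Set V) : ℕ :=
  sSup {d | ∃ v ∈ S, d = ((G.neighborSet v) ∩ S).ncard}

/-- The degree of `x` in the subgraph of `G` induced on `S`. -/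
noncomputable def degIn (G : SimpleGraph V) (S : Set V) (x : V) : ℕ :=
  ((G.neighborSet x) ∩ S).ncard

end Defs
section Stability

open Finset Filter Topology

/-! ### Dense copies of complete multipartite graphs on high-degree vertices -/

theorem card_notMem {V : Type*} [Fintype V] (B : Finset V) [Fintype {v | v ∉ B}] :
    Fintype.card {v | v ∉ B} = Fintype.card V - #B := by
  classical
  rw [← card_compl, ← Fintype.card_coe]
  exact Fintype.card_congr (Equiv.subtypeEquivRight (by simp))

open scoped Classical in
theorem card_edges_le_induce_add {n : ℕ} (G : SimpleGraph (Fin n)) (B : Finset (Fin n)) :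
    #G.edgeFinset ≤ #(G.induce {v | v ∉ B}).edgeFinset + ∑ v ∈ B, G.degree v := by
  have h1 : G.edgeFinset ⊆
      ((G.induce {v | v ∉ B}).edgeFinset.image (Sym2.map Subtype.val)) ∪
        B.biUnion (fun v => G.incidenceFinset v) := by
    intro e he
    induction e with | _ u v
    rw [mem_edgeFinset, mem_edgeSet] at he
    by_cases hu : u ∈ B
    · refine mem_union_right _ (mem_biUnion.mpr ⟨u, hu, ?_⟩)
      simpa [mem_incidenceFinset, mk'_mem_incidenceSet_iff] using he
    by_cases hv : v ∈ B
    · refine mem_union_right _ (mem_biUnion.mpr ⟨v, hv, ?_⟩)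
      simpa [mem_incidenceFinset, mk'_mem_incidenceSet_iff] using he
    · refine mem_union_left _ (mem_image.mpr ⟨s(⟨u, by simpa using hu⟩, ⟨v, by simpa using hv⟩), ?_, ?_⟩)
      · simpa using he
      · simp
  calc #G.edgeFinset ≤ _ := card_le_card h1
    _ ≤ _ := card_union_le _ _
    _ ≤ _ := by
      gcongr
      · exact card_image_le
      · refine card_biUnion_le.trans (le_of_eq ?_)
        simp

theorem turanDensity_le_one {W : Type*} (J : SimpleGraph W) : turanDensity J ≤ 1 := by
  classical
  refine ((isGLB_turanDensity J).1 ⟨2, by simp, rfl⟩).trans ?_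
  have : extremalNumber (Fintype.card (Fin 2)) J ≤ 1 := by
    rw [extremalNumber_le_iff]
    intro G _ _
    simpa using G.card_edgeFinset_le_card_choose_two
  simp only [Fintype.card_fin] at this
  simpa using this

theorem turanDensity_mul_le {W : Type*} (J : SimpleGraph W) {n : ℕ} (hn : 2 ≤ n) :
    turanDensity J * (n * (n - 1) / 2) ≤ extremalNumber n J := by
  have h := (isGLB_turanDensity J).1 ⟨n, hn, rfl⟩
  rwa [le_div_iff₀ (mod_cast Nat.choose_pos hn), Nat.cast_choose_two] at h

theorem turanDensity_nonneg {W : Type*} (J : SimpleGraph W) : 0 ≤ turanDensity J :=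
  (isGLB_turanDensity J).2 (by rintro x ⟨n, -, rfl⟩; positivity)

theorem eventually_extremalNumber_le {W : Type*} (J : SimpleGraph W) {ε : ℝ} (hε : 0 < ε) :
    ∃ N : ℕ, ∀ n, N ≤ n → (extremalNumber n J : ℝ) ≤ (turanDensity J + ε) * n ^ 2 / 2 := by
  have h := (tendsto_turanDensity J).eventually_lt_const (lt_add_of_pos_right _ hε)
  obtain ⟨N, hN⟩ := eventually_atTop.mp h
  refine ⟨max N 2, fun n hn => ?_⟩
  have h1 := hN n (le_of_max_le_left hn)
  rw [div_lt_iff₀ (mod_cast Nat.choose_pos (le_of_max_le_right hn)), Nat.cast_choose_two] at h1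
  have := turanDensity_nonneg J
  have : (0:ℝ) ≤ n := n.cast_nonneg
  nlinarith [mul_nonneg (add_nonneg (turanDensity_nonneg J) hε.le) this]

/-- The arithmetic of `few_low_degree`: `p` is the Turán density, and deleting `b ≈ εn` vertices of
degree below `(p - ε)n` leaves `(n - b)` vertices spanning more than `(p + ε²/8)(n - b)²/2` edges. -/
theorem numeric_contradiction {ε p n b : ℝ} (hε : 0 < ε) (hε1 : ε < 1)
    (hp1 : p ≤ 1) (hn0 : 0 < n) (hb0 : 0 ≤ b) (hbn : b ≤ n) (hb1 : b ≤ ε * n)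
    (hb2 : ε * n < b + 1) (hn : 12 < n * ε ^ 2)
    (key : p * (n * (n - 1) / 2) - ε ^ 2 / 8 * n ^ 2 ≤
      (p + ε ^ 2 / 8) * (n - b) ^ 2 / 2 + b * ((p - ε) * n)) : False := by
  have e1 : (n - b) ^ 2 ≤ n ^ 2 := by gcongr; linarith
  have e2 : b ^ 2 ≤ (ε * n) ^ 2 := by gcongr
  have e3 : p * b ^ 2 ≤ (ε * n) ^ 2 := (mul_le_of_le_one_left (sq_nonneg b) hp1).trans e2
  have e4 : b * ε * n ≤ p * n / 2 + (ε ^ 2 / 8) * n ^ 2 + (ε * n) ^ 2 / 2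
      + ε ^ 2 / 8 * n ^ 2 / 2 := by
    linarith [mul_le_mul_of_nonneg_left e1 (show 0 ≤ ε ^ 2 / 8 / 2 by positivity)]
  have e5 : (ε * n - 1) * (ε * n) ≤ b * (ε * n) := by
    gcongr; linarith
  have e7 : p * n ≤ n := mul_le_of_le_one_left hn0.le hp1
  have e8 : ε * n ≤ n := mul_le_of_le_one_left hn0.le hε1.le
  linarith [mul_lt_mul_of_pos_right hn hn0]

open scoped Classical in
/-- In a near-extremal `J`-free graph almost all degrees are at least `(π(J) - ε)n`: deleting
`εn` vertices of smaller degree would leave a `J`-free graph with too many edges. -/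
theorem few_low_degree {W : Type*} (J : SimpleGraph W) {ε : ℝ} (hε : 0 < ε) (hε1 : ε < 1) :
    ∃ δ : ℝ, 0 < δ ∧ ∃ n₀ : ℕ, ∀ n : ℕ, n₀ ≤ n → ∀ G : SimpleGraph (Fin n), J.Free G →
      (extremalNumber n J : ℝ) - δ * n ^ 2 ≤ #G.edgeFinset →
      (#{v : Fin n | (G.degree v : ℝ) < (turanDensity J - ε) * n} : ℝ) ≤ ε * n := by
  obtain ⟨N, hN⟩ := eventually_extremalNumber_le J (ε := ε ^ 2 / 8) (by positivity)
  obtain ⟨N₁, hN₁⟩ := exists_nat_gt (N / (1 - ε))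
  obtain ⟨N₂, hN₂⟩ := exists_nat_gt (12 / ε ^ 2)
  refine ⟨ε ^ 2 / 8, by positivity, max 2 (max N₁ N₂), fun n hn G hG he => ?_⟩
  have hn2 : 2 ≤ n := le_of_max_le_left hn
  have hnN₁ : (N₁ : ℝ) ≤ n := mod_cast le_of_max_le_left (le_of_max_le_right hn)
  have hnN₂ : (N₂ : ℝ) ≤ n := mod_cast le_of_max_le_right (le_of_max_le_right hn)
  have hn0 : (0 : ℝ) < n := by positivity
  by_contra! hB
  set p := turanDensity J with hp
  have hp0 : 0 ≤ p := turanDensity_nonneg J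
  have hp1 : p ≤ 1 := turanDensity_le_one J
  set b := ⌊ε * n⌋₊ with hb
  have hb1 : (b : ℝ) ≤ ε * n := Nat.floor_le (by positivity)
  have hb2 : ε * n < b + 1 := Nat.lt_floor_add_one _
  obtain ⟨B, hBsub, hBc⟩ := exists_subset_card_eq
    (show b ≤ #{v : Fin n | (G.degree v : ℝ) < (p - ε) * n} by
      have : (b : ℝ) ≤ #{v : Fin n | (G.degree v : ℝ) < (p - ε) * n} := hb1.trans hB.le
      exact_mod_cast this)
  have h1 := card_edges_le_induce_add G B
  have h2 : (∑ v ∈ B, G.degree v : ℝ) ≤ b * ((p - ε) * n) := by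
    rw [← hBc, ← nsmul_eq_mul]
    refine sum_le_card_nsmul _ _ _ fun v hv => ?_
    have := hBsub hv
    simp only [mem_filter, mem_univ, true_and] at this
    exact this.le
  have hcard : Fintype.card {v | v ∉ B} = n - b := by
    rw [card_notMem, Fintype.card_fin, hBc]
  have hbn : b ≤ n := by
    have : (b : ℝ) ≤ n := hb1.trans (by nlinarith)
    exact_mod_cast this
  have hfree : J.Free (G.induce {v | v ∉ B}) := fun h =>
    hG (h.trans ⟨(Embedding.induce _).toCopy⟩)
  have h3 := card_edgeFinset_le_extremalNumber hfree
  rw [hcard] at h3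
  have hm : ((n - b : ℕ) : ℝ) = n - b := Nat.cast_sub hbn
  have h4 := hN (n - b) (by
    have : (N : ℝ) ≤ ((n - b : ℕ) : ℝ) := by
      rw [hm]
      rw [div_lt_iff₀ (by linarith)] at hN₁
      nlinarith
    exact_mod_cast this)
  rw [hm] at h4
  have h5 : p * (n * (n - 1) / 2) ≤ extremalNumber n J := turanDensity_mul_le J hn2
  have h6 : (#G.edgeFinset : ℝ) ≤ #(G.induce {v | v ∉ B}).edgeFinset
      + ∑ v ∈ B, (G.degree v : ℝ) := by exact_mod_cast h1
  have h7 : (#(G.induce {v | v ∉ B}).edgeFinset : ℝ) ≤ extremalNumber (n - b) J := by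
    exact_mod_cast h3
  rw [div_lt_iff₀ (by positivity)] at hN₂
  have hb0 : (0 : ℝ) ≤ b := b.cast_nonneg
  have key : p * (n * (n - 1) / 2) - ε ^ 2 / 8 * n ^ 2 ≤
      (p + ε ^ 2 / 8) * (n - b) ^ 2 / 2 + b * ((p - ε) * n) := by linarith
  exact numeric_contradiction hε hε1 hp1 hn0 hb0 (mod_cast hbn) hb1 hb2
    (hN₂.trans_le (by gcongr)) key

/-- If `π(J) > 1 - 1/r`, then a near-extremal `J`-free graph contains a complete `(r+1)`-partite
graph with parts of size `T`, all of whose vertices have degree at least `(π(J) - ε)n`. After the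
removal of the low-degree vertices this is the minimum-degree form of the Erdős–Stone theorem. -/
theorem exists_large_equipartite {W : Type*} (J : SimpleGraph W) (r T : ℕ) {ε : ℝ} (hε : 0 < ε)
    (hπ : 1 - 1 / (r : ℝ) < turanDensity J) :
    ∃ δ : ℝ, 0 < δ ∧ ∃ n₀ : ℕ, ∀ n : ℕ, n₀ ≤ n → ∀ G : SimpleGraph (Fin n), J.Free G →
      (extremalNumber n J : ℝ) - δ * n ^ 2 ≤ G.edgeSet.ncard →
      ∃ f : Copy (completeEquipartiteGraph (r + 1) T) G,
        ∀ x, (turanDensity J - ε) * n ≤ (G.neighborSet (f x)).ncard := by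
  classical
  set p := turanDensity J with hp
  set c := p - (1 - 1 / (r : ℝ)) with hc
  have hc0 : 0 < c := by linarith
  obtain ⟨η, hη0, hη1, hηε, hηc⟩ : ∃ η : ℝ, 0 < η ∧ η < 1 ∧ η ≤ ε ∧ η ≤ c / 4 :=
    ⟨min (1 / 2) (min ε (c / 4)), by positivity, by
      refine (min_le_left _ _).trans_lt (by norm_num),
      (min_le_right _ _).trans (min_le_left _ _), (min_le_right _ _).trans (min_le_right _ _)⟩
  obtain ⟨δ, hδ, n₀, h⟩ := few_low_degree J hη0 hη1
  obtain ⟨N, hN⟩ := eventually_atTop.mp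
    (eventually_completeEquipartiteGraph_isContained_of_minDegree (half_pos hc0) r T)
  obtain ⟨N₁, hN₁⟩ := exists_nat_gt ((N + 1) / (1 - η))
  refine ⟨δ, hδ, max n₀ N₁, fun n hn G hG he => ?_⟩
  have hnN₁ : (N₁ : ℝ) ≤ n := mod_cast le_of_max_le_right hn
  have hE : G.edgeSet.ncard = #G.edgeFinset := by
    rw [← coe_edgeFinset, Set.ncard_coe_finset]
  rw [hE] at he
  have hB := h n (le_of_max_le_left hn) G hG he
  set B : Finset (Fin n) := {v : Fin n | (G.degree v : ℝ) < (turanDensity J - η) * n} with hBdef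
  have hm : Fintype.card {v | v ∉ B} = n - #B := by
    rw [card_notMem, Fintype.card_fin]
  have hbn : #B ≤ n := by simpa using card_le_univ B
  have hmc : ((n - #B : ℕ) : ℝ) = n - #B := Nat.cast_sub hbn
  have hmN : N + 1 ≤ n - #B := by
    have : ((N + 1 : ℕ) : ℝ) ≤ ((n - #B : ℕ) : ℝ) := by
      rw [hmc]
      rw [div_lt_iff₀ (by linarith)] at hN₁
      push_cast
      nlinarith
    exact_mod_cast this
  have hne : Nonempty {v : Fin n | v ∉ B} := by
    rw [← Fintype.card_pos_iff, hm]; omega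
  set G' := G.induce {v | v ∉ B} with hG'
  have hdeg : ((1 - 1 / (r : ℝ)) + c / 2) * (n - #B : ℕ) ≤ G'.minDegree := by
    obtain ⟨v, hv⟩ := G'.exists_minimal_degree_vertex
    rw [hv]
    have hvB : v.1 ∉ B := v.2
    have h1 : (p - η) * n ≤ G.degree v.1 := by
      by_contra! hlt
      exact hvB (by simpa [hBdef] using hlt)
    have h2 : G.degree v.1 ≤ G'.degree v + #B := by
      have : G.neighborFinset v.1 ⊆ (G'.neighborFinset v).image Subtype.val ∪ B := by
        intro w hw
        by_cases hwB : w ∈ B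
        · exact mem_union_right _ hwB
        · refine mem_union_left _ (mem_image.mpr ⟨⟨w, by simpa using hwB⟩, ?_, rfl⟩)
          simpa [hG'] using hw
      calc G.degree v.1 ≤ _ := card_le_card this
        _ ≤ _ := card_union_le _ _
        _ ≤ _ := by gcongr; exact card_image_le
    have h3 : (G.degree v.1 : ℝ) ≤ G'.degree v + #B := by exact_mod_cast h2
    rw [hmc]
    have e1 : (1 - 1 / (r : ℝ)) + c / 2 = p - c / 2 := by rw [hc]; ring
    rw [e1]
    have hp1 := turanDensity_le_one J
    have hp0 : 0 ≤ p - c / 2 := by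
      rw [← e1]
      have : 1 / (r : ℝ) ≤ 1 := by
        rcases Nat.eq_zero_or_pos r with h0 | h0
        · simp [h0]
        · rw [div_le_one (by positivity)]; exact_mod_cast h0
      linarith
    have hn0 : (0 : ℝ) ≤ n := n.cast_nonneg
    have hB0 : (0 : ℝ) ≤ #B := Nat.cast_nonneg _
    nlinarith
  have hiso := G'.overFinIso hm
  rw [hiso.minDegree_eq] at hdeg
  obtain ⟨f⟩ := hN (n - #B) (by omega) (G := G'.overFin hm) hdeg
  let g : Copy (completeEquipartiteGraph (r + 1) T) G :=
    ((Embedding.induce _).toCopy.comp hiso.symm.toCopy).comp f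
  refine ⟨g, fun x => ?_⟩
  have hgx : g x ∉ B := (hiso.symm (f x)).2
  have h1 : (p - η) * n ≤ G.degree (g x) := by
    by_contra! hlt
    exact hgx (by simpa [hBdef] using hlt)
  have h2 : (G.neighborSet (g x)).ncard = G.degree (g x) := by
    rw [← card_neighborFinset_eq_degree, ← Set.ncard_coe_finset, coe_neighborFinset]
  rw [h2]
  refine le_trans ?_ h1
  gcongr

/-! ### Turán densities and copies of `H` -/

/-- An `r`-colourable graph embeds into any family of `r` completely joined vertex sets, each of
size at least `|H|`. -/
theorem containsCopy_of_parts {V W : Type*} [Fintype W] {H : SimpleGraph W} {G : SimpleGraph V}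
    {r : ℕ} (C : H.Coloring (Fin r)) (P : Fin r → Finset V)
    (hcard : ∀ i, Fintype.card W ≤ #(P i))
    (hadj : ∀ i j, i ≠ j → ∀ u ∈ P i, ∀ v ∈ P j, G.Adj u v) : ContainsCopy H G := by
  have he : ∀ i, Nonempty (W ↪ P i) := fun i => by
    rw [Function.Embedding.nonempty_iff_card_le, Fintype.card_coe]
    exact hcard i
  let e := fun i => (he i).some
  refine ⟨⟨fun w => e (C w) w, fun {a b} hab => ?_⟩, fun a b hab => ?_⟩
  · exact hadj _ _ (C.valid hab) _ (e (C a) a).2 _ (e (C b) b).2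
  · change (e (C a) a : V) = e (C b) b at hab
    by_cases hc : C a = C b
    · rw [← hc] at hab
      exact (e (C a)).injective (Subtype.ext hab)
    · have := hadj _ _ hc _ (e (C a) a).2 _ (e (C b) b).2
      rw [hab] at this
      exact absurd this (G.irrefl)

/-- Balanced bicliques have Turán density `0`: otherwise `exists_large_equipartite` with `r = 1`
would find `K_{t,t}` in an extremal `K_{t,t}`-free graph. -/
theorem turanDensity_biclique {t : ℕ} (ht : 1 ≤ t) :
    turanDensity (completeEquipartiteGraph 2 t) = 0 := by
  classical
  by_contra hne
  have hpos : 1 - 1 / ((1 : ℕ) : ℝ) < turanDensity (completeEquipartiteGraph 2 t) := by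
    have := lt_of_le_of_ne (turanDensity_nonneg _) (Ne.symm hne)
    simpa using this
  obtain ⟨δ, hδ, n₀, h⟩ := exists_large_equipartite _ 1 t one_pos hpos
  have hbot : completeEquipartiteGraph 2 t ≠ ⊥ := by
    rw [Ne, completeEquipartiteGraph_eq_bot_iff]; omega
  obtain ⟨G, _, hG⟩ := exists_isExtremal_free (V := Fin n₀) hbot
  have hcard := (isExtremal_free_iff.mp hG).2
  obtain ⟨f, -⟩ := h n₀ le_rfl G hG.prop (by
    have hE : G.edgeSet.ncard = #G.edgeFinset := by
      rw [← coe_edgeFinset, Set.ncard_coe_finset]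
    rw [hE, hcard, Fintype.card_fin]
    have : 0 ≤ δ * (n₀ : ℝ) ^ 2 := by positivity
    linarith)
  exact hG.prop ⟨f⟩

/-- The complete `k`-partite graphs with equal parts are `H`-free, which bounds `π(H)` from below. -/
theorem le_turanDensity {W : Type*} (H : SimpleGraph W) {k : ℕ} (hk : 1 ≤ k)
    (hH : ¬ H.Colorable k) : 1 - 1 / (k : ℝ) ≤ turanDensity H := by
  classical
  have hlim : Tendsto (fun m : ℕ => k * m) atTop atTop :=
    tendsto_id.const_mul_atTop' (by omega)
  refine ge_of_tendsto ((tendsto_turanDensity H).comp hlim) ?_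
  filter_upwards [eventually_ge_atTop 2] with m hm
  have hfree : H.Free (completeEquipartiteGraph k m) := fun ⟨f⟩ =>
    hH ⟨(Coloring.mk (fun x : Fin k × Fin m => x.1) (fun h => h)).comp f.toHom⟩
  have h1 := card_edgeFinset_le_extremalNumber hfree
  rw [card_edgeFinset_completeEquipartiteGraph, Fintype.card_prod, Fintype.card_fin,
    Fintype.card_fin] at h1
  have h2 : ((k.choose 2 * m ^ 2 : ℕ) : ℝ) ≤ extremalNumber (k * m) H := by exact_mod_cast h1
  have hkm : 2 ≤ k * m := by nlinarith
  simp only [Function.comp_apply]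
  rw [le_div_iff₀ (mod_cast Nat.choose_pos hkm)]
  refine le_trans ?_ h2
  push_cast [Nat.cast_choose_two]
  have hk0 : (0 : ℝ) < k := by positivity
  have hk1 : (1 : ℝ) ≤ k := by exact_mod_cast hk
  have : (1 - 1 / (k : ℝ)) * (k * m * (k * m - 1) / 2) = (k - 1) * m * (k * m - 1) / 2 := by
    field_simp
  rw [this]
  nlinarith [mul_nonneg (sub_nonneg.mpr hk1) (show (0 : ℝ) ≤ m by positivity)]

/-- Mathlib's extremal number is at most `exNum`, so being near-extremal for `exNum` implies being
near-extremal for `extremalNumber`. -/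
theorem extremalNumber_le_exNum {W : Type*} (n : ℕ) (H : SimpleGraph W) :
    extremalNumber n H ≤ exNum n H := by
  have h : extremalNumber (Fintype.card (Fin n)) H ≤ exNum n H := by
    rw [extremalNumber_le_iff]
    intro G _ hG
    refine le_csSup ?_ ⟨G, fun ⟨f, hf⟩ => hG ⟨⟨f, hf⟩⟩, ?_⟩
    · exact ((Set.finite_range fun G : SimpleGraph (Fin n) => G.edgeSet.ncard).subset
        (by rintro m ⟨G, -, rfl⟩; exact ⟨G, rfl⟩)).bddAbove
    · rw [← coe_edgeFinset, Set.ncard_coe_finset]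
  simpa using h

/-! ### Links of vertices in a complete multipartite subgraph -/

open scoped Classical in
/-- The neighbours of `v` in the `i`-th part of the family `φ`, whose `i`-th part consists of the
vertices `φ i a`; a neighbour `φ i a` is recorded by its index `a`. -/
noncomputable def link {V : Type*} {k T : ℕ} (G : SimpleGraph V) (φ : Fin k → Fin T → V)
    (v : V) (i : Fin k) : Finset (Fin T) :=
  {a | G.Adj v (φ i a)}

theorem mem_link {V : Type*} {k T : ℕ} {G : SimpleGraph V} {φ : Fin k → Fin T → V}
    {v : V} {i : Fin k} {a : Fin T} : a ∈ link G φ v i ↔ G.Adj v (φ i a) := by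
  simp [link]

theorem card_link_le {V : Type*} {k T : ℕ} (G : SimpleGraph V) (φ : Fin k → Fin T → V)
    (v : V) (i : Fin k) : #(link G φ v i) ≤ T := by
  simpa using card_le_univ (link G φ v i)

section Link

variable {W : Type*} [Fintype W] {H : SimpleGraph W} {n k T : ℕ} {G : SimpleGraph (Fin n)}
  {φ : Fin k → Fin T → Fin n}

/-- Only boundedly many vertices have at least `|H|` neighbours in every part: `|H|` such vertices
with the same links would, together with these links, span all `k + 1` colour classes of `H`. -/
theorem card_fully_joined_le (C : H.Coloring (Fin (k + 1))) (hG : ¬ ContainsCopy H G)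
    (hinj : ∀ i, Function.Injective (φ i)) (hφ : ∀ i j, i ≠ j → ∀ a b, G.Adj (φ i a) (φ j b)) :
    #{v : Fin n | ∀ i, Fintype.card W ≤ #(link G φ v i)} ≤
      Fintype.card (Fin k → Finset (Fin T)) * Fintype.card W := by
  by_contra! hlt
  obtain ⟨y, -, hy⟩ := exists_lt_card_fiber_of_mul_lt_card_of_maps_to
    (f := link G φ) (t := univ) (fun _ _ => mem_univ _) (by simpa using hlt)
  set F := ({v ∈ ({v : Fin n | ∀ i, Fintype.card W ≤ #(link G φ v i)} : Finset (Fin n)) |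
    link G φ v = y}) with hF
  have hFmem : ∀ v ∈ F, (∀ i, Fintype.card W ≤ #(y i)) ∧ ∀ i, ∀ a ∈ y i, G.Adj v (φ i a) := by
    intro v hv
    simp only [hF, mem_filter, mem_univ, true_and] at hv
    obtain ⟨h1, rfl⟩ := hv
    exact ⟨h1, fun i a ha => mem_link.mp ha⟩
  obtain ⟨v₀, hv₀⟩ : F.Nonempty := card_pos.mp (by omega)
  refine hG (containsCopy_of_parts C
    (Fin.cons F (fun i => (y i).map ⟨φ i, hinj i⟩) : Fin (k + 1) → Finset (Fin n)) ?_ ?_)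
  · intro i
    refine Fin.cases ?_ (fun i => ?_) i
    · simpa using hy.le
    · simpa using (hFmem v₀ hv₀).1 i
  · intro i j
    refine Fin.cases ?_ (fun i => ?_) i <;> refine Fin.cases ?_ (fun j => ?_) j
    · simp
    · intro _ u hu v hv
      simp only [Fin.cons_zero, Fin.cons_succ, Finset.mem_map, Function.Embedding.coeFn_mk] at hu hv
      obtain ⟨a, ha, rfl⟩ := hv
      exact (hFmem u hu).2 j a ha
    · intro _ u hu v hv
      simp only [Fin.cons_zero, Fin.cons_succ, Finset.mem_map, Function.Embedding.coeFn_mk] at hu hv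
      obtain ⟨a, ha, rfl⟩ := hu
      exact ((hFmem v hv).2 i a ha).symm
    · intro hij u hu v hv
      simp only [Fin.cons_succ, Finset.mem_map, Function.Embedding.coeFn_mk] at hu hv
      obtain ⟨a, ha, rfl⟩ := hu
      obtain ⟨b, hb, rfl⟩ := hv
      exact hφ i j (fun h => hij (by rw [h])) a b

/-- Double counting of the edges between the parts and the whole graph. -/
theorem sum_card_link : ∑ v, ∑ i, #(link G φ v i) =
    ∑ i, ∑ a, (G.neighborSet (φ i a)).ncard := by
  classical
  rw [sum_comm]
  refine sum_congr rfl fun i _ => ?_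
  have h1 : ∀ v, #(link G φ v i) = ∑ a, if G.Adj v (φ i a) then 1 else 0 := by
    intro v
    rw [link, card_filter]
  have h2 : ∀ a, (G.neighborSet (φ i a)).ncard = ∑ v, if G.Adj v (φ i a) then 1 else 0 := by
    intro a
    rw [← card_filter, ← Set.ncard_coe_finset]
    congr 1
    ext v
    simp [adj_comm]
  simp_rw [h1, h2]
  exact sum_comm

theorem sum_card_link_le_of_lt {t : ℕ} {v : Fin n} {i : Fin k} (h : #(link G φ v i) < t) :
    ∑ j, #(link G φ v j) ≤ (k - 1) * T + t := by
  rw [← add_sum_erase _ _ (mem_univ i)]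
  have : ∑ j ∈ univ.erase i, #(link G φ v j) ≤ #(univ.erase i) • T :=
    sum_le_card_nsmul _ _ _ fun j _ => card_link_le G φ v j
  simp only [card_erase_of_mem (mem_univ i), card_univ, Fintype.card_fin, smul_eq_mul] at this
  omega

theorem le_card_link_of_ne {t : ℕ} {v : Fin n} {i j : Fin k} (h : #(link G φ v i) < t)
    (hij : j ≠ i) : ∑ j, #(link G φ v j) + T ≤ (k - 1) * T + t + #(link G φ v j) := by
  rw [← add_sum_erase _ _ (mem_univ i), ← add_sum_erase _ _ (mem_erase.mpr ⟨hij, mem_univ j⟩)]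
  have : ∑ j ∈ (univ.erase i).erase j, #(link G φ v j) ≤ #((univ.erase i).erase j) • T :=
    sum_le_card_nsmul _ _ _ fun j _ => card_link_le G φ v j
  rw [card_erase_of_mem (mem_erase.mpr ⟨hij, mem_univ j⟩)] at this
  simp only [card_erase_of_mem (mem_univ i), card_univ, Fintype.card_fin, smul_eq_mul] at this
  have hk : 2 ≤ k := by
    by_contra! hk
    exact hij (by ext; omega)
  obtain ⟨l, rfl⟩ := Nat.exists_eq_add_of_le hk
  have e1 : 2 + l - 1 - 1 = l := by omega
  have e2 : 2 + l - 1 = l + 1 := by omega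
  rw [e1] at this
  rw [e2, add_mul]
  omega

/-- Bound for the number of vertices that have fewer than `t` neighbours in some part and whose
total link is `θT` below the maximal possible value `(k - 1)T`. The degrees of the `φ i a` force the
average total link to be close to `(k - 1)T`, and only vertices having `t` neighbours in every part
exceed this value by more than `t`. -/
theorem card_deficient_le {t : ℕ} {ε θ : ℝ} (hk : 1 ≤ k)
    (hdeg : ∀ i a, (1 - 1 / (k : ℝ) - ε) * n ≤ (G.neighborSet (φ i a)).ncard) :
    (#{v : Fin n | (∃ i, #(link G φ v i) < t) ∧
        ((∑ i, #(link G φ v i) : ℕ) : ℝ) < (k - 1) * T - θ * T} : ℝ) * (θ * T) ≤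
      t * n + ε * k * T * n + #{v : Fin n | ∀ i, t ≤ #(link G φ v i)} * T := by
  classical
  set X : Finset (Fin n) := {v : Fin n | ∀ i, t ≤ #(link G φ v i)} with hX
  set Y : Finset (Fin n) := {v : Fin n | (∃ i, #(link G φ v i) < t) ∧
        ((∑ i, #(link G φ v i) : ℕ) : ℝ) < (k - 1) * T - θ * T} with hY
  have hk0 : (0 : ℝ) < k := by positivity
  have hk1 : ((k - 1 : ℕ) : ℝ) = k - 1 := by rw [Nat.cast_sub hk]; simp
  have hpt : ∀ v, ((∑ i, #(link G φ v i) : ℕ) : ℝ) ≤ ((k - 1) * T + t)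
      + (if v ∈ X then (T : ℝ) else 0) - (if v ∈ Y then θ * T else 0) := by
    intro v
    have ht0 : (0 : ℝ) ≤ t := t.cast_nonneg
    by_cases hvX : v ∈ X
    · have hvY : v ∉ Y := by
        simp only [hX, hY, mem_filter, mem_univ, true_and] at hvX ⊢
        rintro ⟨⟨i, hi⟩, -⟩
        exact absurd (hvX i) (by omega)
      rw [if_pos hvX, if_neg hvY]
      have : ∑ i, #(link G φ v i) ≤ k * T := by
        simpa using sum_le_card_nsmul (univ : Finset (Fin k)) _ _
          fun j _ => card_link_le G φ v j
      have : ((∑ i, #(link G φ v i) : ℕ) : ℝ) ≤ k * T := by exact_mod_cast this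
      linarith
    · rw [if_neg hvX]
      obtain ⟨i, hi⟩ : ∃ i, #(link G φ v i) < t := by simpa [hX] using hvX
      by_cases hvY : v ∈ Y
      · rw [if_pos hvY]
        simp only [hY, mem_filter, mem_univ, true_and] at hvY
        linarith [hvY.2]
      · rw [if_neg hvY]
        have : ((∑ i, #(link G φ v i) : ℕ) : ℝ) ≤ ((k - 1 : ℕ) : ℝ) * T + t := by
          exact_mod_cast sum_card_link_le_of_lt hi
        rw [hk1] at this
        linarith
  have hsum := sum_le_sum fun v (_ : v ∈ (univ : Finset (Fin n))) => hpt v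
  rw [sum_sub_distrib, sum_add_distrib] at hsum
  simp only [sum_const, card_univ, Fintype.card_fin, nsmul_eq_mul, sum_ite_mem, univ_inter]
    at hsum
  have hlow : (k * T : ℝ) * ((1 - 1 / (k : ℝ) - ε) * n) ≤
      ∑ v, ((∑ i, #(link G φ v i) : ℕ) : ℝ) := by
    rw [← Nat.cast_sum, sum_card_link]
    push_cast
    calc (k * T : ℝ) * ((1 - 1 / (k : ℝ) - ε) * n)
        = ∑ i : Fin k, ∑ a : Fin T, (1 - 1 / (k : ℝ) - ε) * n := by simp; ring
      _ ≤ _ := sum_le_sum fun i _ => sum_le_sum fun a _ => hdeg i a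
  have e : (k * T : ℝ) * ((1 - 1 / (k : ℝ) - ε) * n) = (k - 1) * T * n - ε * k * T * n := by
    field_simp
  rw [e] at hlow
  linarith

/-- There is no `K_{t,t}` with `t = |H|` between vertices that are joined to almost all vertices of
every part other than part `i`: the common neighbours in those `k - 1` parts, together with the two
sides of the biclique, would be `k + 1` completely joined sets of size `t`. -/
theorem no_biclique (C : H.Coloring (Fin (k + 1))) (hG : ¬ ContainsCopy H G)
    (hinj : ∀ i, Function.Injective (φ i)) (hφ : ∀ i j, i ≠ j → ∀ a b, G.Adj (φ i a) (φ j b))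
    {d : ℕ} (hd : 2 * Fintype.card W * d + Fintype.card W ≤ T) (i : Fin k)
    (A B : Finset (Fin n)) (hA : #A = Fintype.card W) (hB : #B = Fintype.card W)
    (hAB : ∀ u ∈ A, ∀ v ∈ B, G.Adj u v)
    (hlink : ∀ v ∈ A ∪ B, ∀ j ≠ i, T ≤ #(link G φ v j) + d) : False := by
  classical
  let D : Fin k → Finset (Fin T) := fun j => {a | ∀ v ∈ A ∪ B, G.Adj v (φ j a)}
  have hD : ∀ j ≠ i, Fintype.card W ≤ #(D j) := by
    intro j hj
    have h1 : (D j)ᶜ ⊆ (A ∪ B).biUnion fun v => (link G φ v j)ᶜ := by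
      intro a ha
      simp only [D, mem_compl, mem_filter, mem_univ, true_and, not_forall] at ha
      obtain ⟨v, hv, hva⟩ := ha
      exact mem_biUnion.mpr ⟨v, hv, by simpa [mem_link] using hva⟩
    have h2 : #(D j)ᶜ ≤ #(A ∪ B) * d := (card_le_card h1).trans <|
      card_biUnion_le_card_mul _ _ _ fun v hv => by
        rw [card_compl, Fintype.card_fin]
        have := hlink v hv j hj
        omega
    have h3 : #(A ∪ B) ≤ 2 * Fintype.card W := by
      have := card_union_le A B
      omega
    have h4 := Nat.mul_le_mul_right d h3
    rw [card_compl, Fintype.card_fin] at h2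
    omega
  have hDadj : ∀ j, ∀ a ∈ D j, ∀ v ∈ A ∪ B, G.Adj v (φ j a) := fun j a ha => by
    simpa only [D, mem_filter, mem_univ, true_and] using ha
  let P : Fin k → Finset (Fin n) := fun j => if j = i then A else (D j).map ⟨φ j, hinj j⟩
  have hPB : ∀ j, ∀ u ∈ P j, ∀ v ∈ B, G.Adj u v := by
    intro j u hu v hv
    by_cases hj : j = i
    · simp only [P, if_pos hj] at hu
      exact hAB u hu v hv
    · simp only [P, if_neg hj, Finset.mem_map, Function.Embedding.coeFn_mk] at hu
      obtain ⟨a, ha, rfl⟩ := hu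
      exact (hDadj j a ha v (mem_union_right _ hv)).symm
  have hPP : ∀ j l, j ≠ l → ∀ u ∈ P j, ∀ v ∈ P l, G.Adj u v := by
    intro j l hjl u hu v hv
    by_cases hj : j = i
    · have hl : l ≠ i := fun h => hjl (hj.trans h.symm)
      simp only [P, if_pos hj, if_neg hl, Finset.mem_map, Function.Embedding.coeFn_mk] at hu hv
      obtain ⟨a, ha, rfl⟩ := hv
      exact hDadj l a ha u (mem_union_left _ hu)
    · by_cases hl : l = i
      · simp only [P, if_neg hj, if_pos hl, Finset.mem_map, Function.Embedding.coeFn_mk] at hu hv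
        obtain ⟨a, ha, rfl⟩ := hu
        exact (hDadj j a ha v (mem_union_left _ hv)).symm
      · simp only [P, if_neg hj, if_neg hl, Finset.mem_map, Function.Embedding.coeFn_mk] at hu hv
        obtain ⟨a, ha, rfl⟩ := hu
        obtain ⟨b, hb, rfl⟩ := hv
        exact hφ j l hjl a b
  refine hG (containsCopy_of_parts C (Fin.cons B P : Fin (k + 1) → Finset (Fin n)) ?_ ?_)
  · intro j
    refine Fin.cases ?_ (fun j => ?_) j
    · simpa using hB.ge
    · simp only [Fin.cons_succ, P]
      split_ifs with hj
      · exact hA.ge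
      · simpa using hD j hj
  · intro j l
    refine Fin.cases ?_ (fun j => ?_) j <;> refine Fin.cases ?_ (fun l => ?_) l
    · simp
    · intro _ u hu v hv
      exact (hPB l v (by simpa using hv) u (by simpa using hu)).symm
    · intro _ u hu v hv
      exact hPB j u (by simpa using hu) v (by simpa using hv)
    · intro hjl u hu v hv
      exact hPP j l (fun h => hjl (by rw [h])) u (by simpa using hu) v (by simpa using hv)

/-- The partition given by a complete `k`-partite subgraph with parts of size `T = 4tm`, `t = |H|`:
every vertex is put into the class of a part in which it has fewer than `t` neighbours. Up to a
small exceptional set `B`, no class contains a `K_{t,t}`. -/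
theorem exists_partition_of_equipartite {ε : ℝ} {m : ℕ} (C : H.Coloring (Fin (k + 1)))
    (hG : ¬ ContainsCopy H G) (hinj : ∀ i, Function.Injective (φ i))
    (hφ : ∀ i j, i ≠ j → ∀ a b, G.Adj (φ i a) (φ j b)) (hk : 1 ≤ k)
    (ht : 1 ≤ Fintype.card W) (hT : T = 4 * Fintype.card W * m) (hm : Fintype.card W + 1 ≤ m)
    (hεm : 1 ≤ 4 * ε * m)
    (hdeg : ∀ i a, (1 - 1 / (k : ℝ) - ε) * n ≤ (G.neighborSet (φ i a)).ncard) :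
    ∃ (B : Finset (Fin n)) (f : Fin n → Fin k),
      (#B : ℝ) ≤ (Fintype.card (Fin k → Finset (Fin T)) * Fintype.card W : ℕ) *
        (1 + 4 * Fintype.card W) + 4 * Fintype.card W * (k + 1) * ε * n ∧
      ∀ i, ∀ Q : SimpleGraph (Fin n), Q ≤ G → (∀ u v, Q.Adj u v → f u = i ∧ u ∉ B) →
        (completeEquipartiteGraph 2 (Fintype.card W)).Free Q := by
  classical
  set t := Fintype.card W with htdef
  set M := Fintype.card (Fin k → Finset (Fin T)) * t with hM
  have hm0 : (0 : ℝ) < m := by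
    have : 0 < m := by omega
    exact_mod_cast this
  have ht0 : (0 : ℝ) < t := by exact_mod_cast ht
  have hTR : (T : ℝ) = 4 * t * m := by rw [hT]; push_cast; ring
  have hθT : 1 / (4 * t : ℝ) * T = m := by rw [hTR]; field_simp
  -- `X`: vertices joined to `t` vertices of every part; `Y`: other vertices with a small total link
  set X : Finset (Fin n) := {v | ∀ i, t ≤ #(link G φ v i)} with hX
  set Y : Finset (Fin n) := {v | (∃ i, #(link G φ v i) < t) ∧
    ((∑ i, #(link G φ v i) : ℕ) : ℝ) < (k - 1) * T - 1 / (4 * t : ℝ) * T} with hY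
  have hXc : (#X : ℝ) ≤ M := by exact_mod_cast card_fully_joined_le C hG hinj hφ
  have hYc : (#Y : ℝ) * (1 / (4 * t : ℝ) * T) ≤ t * n + ε * k * T * n + #X * T :=
    card_deficient_le hk hdeg
  rw [hθT, hTR] at hYc
  have hYc' : (#Y : ℝ) ≤ 4 * t * (k + 1) * ε * n + 4 * t * M := by
    refine le_of_mul_le_mul_right (hYc.trans ?_) hm0
    have h1 : (t * n : ℝ) * 1 ≤ t * n * (4 * ε * m) := by gcongr
    have h2 : (#X : ℝ) * (4 * t * m) ≤ M * (4 * t * m) := by gcongr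
    linarith
  have hcl : ∀ v, ∃ i : Fin k, v ∉ X → #(link G φ v i) < t := by
    intro v
    by_cases hv : v ∈ X
    · exact ⟨⟨0, hk⟩, fun h => absurd hv h⟩
    · obtain ⟨i, hi⟩ : ∃ i, #(link G φ v i) < t := by simpa [hX] using hv
      exact ⟨i, fun _ => hi⟩
  choose f hf using hcl
  refine ⟨X ∪ Y, f, ?_, ?_⟩
  · have : (#(X ∪ Y) : ℝ) ≤ #X + #Y := by exact_mod_cast card_union_le X Y
    linarith
  -- a vertex outside `X ∪ Y` misses at most `m + t` vertices of every part other than its own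
  have hgood : ∀ v, v ∉ X ∪ Y → ∀ j ≠ f v, T ≤ #(link G φ v j) + (m + t) := by
    intro v hv j hj
    rw [mem_union, not_or] at hv
    have h1 := hf v hv.1
    have h2 := le_card_link_of_ne h1 hj
    have h3 : (k - 1 : ℝ) * T - m ≤ ((∑ i, #(link G φ v i) : ℕ) : ℝ) := by
      by_contra! hlt
      refine hv.2 ?_
      simp only [hY, mem_filter, mem_univ, true_and]
      exact ⟨⟨_, h1⟩, by rwa [hθT]⟩
    have h4 : (k - 1) * T ≤ ∑ i, #(link G φ v i) + m := by
      have : (((k - 1) * T : ℕ) : ℝ) ≤ ((∑ i, #(link G φ v i) + m : ℕ) : ℝ) := by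
        rw [Nat.cast_mul, Nat.cast_sub hk, Nat.cast_add]
        push_cast at h3 ⊢
        linarith
      exact_mod_cast this
    omega
  rintro i Q hQG hQ ⟨g⟩
  have hgadj : ∀ a b : Fin t, Q.Adj (g (0, a)) (g (1, b)) := fun a b =>
    g.toHom.map_adj (by simp [completeEquipartiteGraph])
  have hginj : ∀ x : Fin 2, Function.Injective fun a : Fin t => g (x, a) := fun x a b hab => by
    simpa using g.injective hab
  refine no_biclique C hG hinj hφ (d := m + t) ?_ i
    (univ.map ⟨_, hginj 0⟩) (univ.map ⟨_, hginj 1⟩) (by simp [htdef]) (by simp [htdef]) ?_ ?_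
  · rw [hT]
    nlinarith
  · simp only [Finset.mem_map, mem_univ, true_and, Function.Embedding.coeFn_mk]
    rintro _ ⟨a, rfl⟩ _ ⟨b, rfl⟩
    exact hQG (hgadj a b)
  · simp only [mem_union, Finset.mem_map, mem_univ, true_and, Function.Embedding.coeFn_mk]
    rintro _ (⟨a, rfl⟩ | ⟨a, rfl⟩) j hj
    · obtain ⟨h1, h2⟩ := hQ _ _ (hgadj a a)
      exact hgood _ h2 j (by rwa [h1])
    · obtain ⟨h1, h2⟩ := hQ _ _ (hgadj a a).symm
      exact hgood _ h2 j (by rwa [h1])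

end Link

/-! ### Counting the edges inside the classes -/

/-- Edges inside `S` either meet `B` or belong to the subgraph of `G` induced on `S \ B`. -/
theorem edgesIn_le_mul_add {n : ℕ} (G : SimpleGraph (Fin n)) (S : Set (Fin n))
    (B : Finset (Fin n)) (c : ℝ)
    (h : ∀ Q : SimpleGraph (Fin n), Q ≤ G → (∀ u v, Q.Adj u v → u ∈ S ∧ u ∉ B) →
      (Q.edgeSet.ncard : ℝ) ≤ c) :
    (edgesIn G S : ℝ) ≤ #B * n + c := by
  classical
  let Q : SimpleGraph (Fin n) :=
    { Adj := fun u v => G.Adj u v ∧ (u ∈ S ∧ u ∉ B) ∧ v ∈ S ∧ v ∉ B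
      symm := ⟨fun _ _ h => ⟨h.1.symm, h.2.2, h.2.1⟩⟩
      loopless := ⟨fun _ h => G.irrefl h.1⟩ }
  have hQ := h Q (fun _ _ h => h.1) (fun _ _ h => h.2.1)
  have hsub : inEdges G S ⊆ ((B.biUnion fun v => G.incidenceFinset v : Finset _) : Set _) ∪
      Q.edgeSet := by
    rintro e ⟨he, hS⟩
    induction e with | _ u v
    rw [mem_edgeSet] at he
    by_cases hu : u ∈ B
    · refine Or.inl (mem_coe.mpr (mem_biUnion.mpr ⟨u, hu, ?_⟩))
      simpa [mem_incidenceFinset, mk'_mem_incidenceSet_iff] using he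
    by_cases hv : v ∈ B
    · refine Or.inl (mem_coe.mpr (mem_biUnion.mpr ⟨v, hv, ?_⟩))
      simpa [mem_incidenceFinset, mk'_mem_incidenceSet_iff] using he
    · exact Or.inr ⟨he, ⟨hS u (by simp), hu⟩, hS v (by simp), hv⟩
  have h1 : edgesIn G S ≤ #B * n + Q.edgeSet.ncard := by
    refine (Set.ncard_le_ncard hsub (Set.toFinite _)).trans ((Set.ncard_union_le _ _).trans ?_)
    rw [Set.ncard_coe_finset]
    gcongr
    refine card_biUnion_le_card_mul _ _ _ fun v _ => ?_
    rw [card_incidenceFinset_eq_degree]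
    simpa using (G.degree_lt_card_verts v).le
  have h2 : (edgesIn G S : ℝ) ≤ #B * n + Q.edgeSet.ncard := by exact_mod_cast h1
  linarith

theorem eventually_card_le_of_biclique_free {t : ℕ} (ht : 1 ≤ t) {c : ℝ} (hc : 0 < c) :
    ∃ N : ℕ, ∀ n, N ≤ n → ∀ Q : SimpleGraph (Fin n), (completeEquipartiteGraph 2 t).Free Q →
      (Q.edgeSet.ncard : ℝ) ≤ c * n ^ 2 := by
  classical
  obtain ⟨N, hN⟩ := eventually_extremalNumber_le (completeEquipartiteGraph 2 t) hc
  refine ⟨N, fun n hn Q hQ => ?_⟩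
  have h1 := hN n hn
  have h2 := card_edgeFinset_le_extremalNumber hQ
  rw [Fintype.card_fin] at h2
  have h3 : (#Q.edgeFinset : ℝ) ≤ extremalNumber n (completeEquipartiteGraph 2 t) := by
    exact_mod_cast h2
  rw [turanDensity_biclique ht] at h1
  rw [← coe_edgeFinset, Set.ncard_coe_finset]
  have : 0 ≤ c * (n : ℝ) ^ 2 := by positivity
  linarith

end Stability


/-- **Lemma (Erdős–Simonovits stability).** Let `H` have chromatic number `r ≥ 3` and
`H ≠ K_r`. For every `γ > 0` there are `δ > 0` and `n₀` such that every `H`-free graph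
`G` on `n ≥ n₀` vertices with `e(G) ≥ ex(n,H) - δn²` admits a partition of its vertex
set into `r - 1` parts with fewer than `γn²` edges inside the parts in total. -/
theorem erdos_simonovits_stability {W : Type*} [Fintype W] (H : SimpleGraph W) (r : ℕ)
    (hr : 3 ≤ r) (hχ : H.chromaticNumber = (r : ℕ∞))
    (hK : ¬ Nonempty (H ≃g completeGraph (Fin r))) :
    ∀ γ : ℝ, 0 < γ → ∃ δ : ℝ, 0 < δ ∧ ∃ n₀ : ℕ, ∀ n : ℕ, n₀ ≤ n →
      ∀ G : SimpleGraph (Fin n), ¬ ContainsCopy H G →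
        (exNum n H : ℝ) - δ * (n : ℝ) ^ 2 ≤ (G.edgeSet.ncard : ℝ) →
        ∃ f : Fin n → Fin (r - 1),
          ((∑ i : Fin (r - 1), edgesIn G (f ⁻¹' {i}) : ℕ) : ℝ) < γ * (n : ℝ) ^ 2 := by
  classical
  intro γ hγ
  obtain ⟨k', rfl⟩ : ∃ k', r = k' + 2 := ⟨r - 2, by omega⟩
  have hk' : 1 ≤ k' := by omega
  have hcol : H.Colorable (k' + 1 + 1) := by
    rw [← chromaticNumber_le_iff_colorable, hχ]
  have hncol : ¬ H.Colorable (k' + 1) := by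
    rw [← chromaticNumber_le_iff_colorable, hχ, not_le]
    exact_mod_cast Nat.lt_succ_self (k' + 1)
  obtain ⟨C⟩ := hcol
  have ht : 1 ≤ Fintype.card W := by
    by_contra! h0
    have : IsEmpty W := Fintype.card_eq_zero_iff.mp (by omega)
    exact hncol ⟨Coloring.mk (fun w => isEmptyElim w) (fun {w} => isEmptyElim w)⟩
  set t := Fintype.card W with htdef
  set k := k' + 1 with hkdef
  have hk0 : (0 : ℝ) < k := by positivity
  have ht0 : (0 : ℝ) < t := by exact_mod_cast ht
  -- `ε` makes the linear part of the bound for the exceptional set cost `γn²/4` edges over all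
  -- classes; its constant part and the biclique-free remainders cost another `γn²/4` each
  obtain ⟨ε, hε, hεeq⟩ : ∃ ε : ℝ, 0 < ε ∧ k * (4 * t * (k + 1) * ε) = γ / 4 :=
    ⟨γ / (16 * t * k * (k + 1)), by positivity, by field_simp; norm_num⟩
  obtain ⟨m₀, hm₀⟩ := exists_nat_ge (1 / (4 * ε))
  set m := max m₀ (t + 1) with hmdef
  have hεm : 1 ≤ 4 * ε * m := by
    rw [div_le_iff₀ (by positivity)] at hm₀
    have : (m₀ : ℝ) ≤ m := by exact_mod_cast le_max_left _ _
    nlinarith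
  set M := Fintype.card (Fin k → Finset (Fin (4 * t * m))) * t with hM
  have hdens : 1 - 1 / (k : ℝ) ≤ turanDensity H := le_turanDensity H (by omega) hncol
  have hπ : 1 - 1 / (k' : ℝ) < turanDensity H := by
    refine lt_of_lt_of_le ?_ hdens
    have h0 : (0 : ℝ) < k' := by exact_mod_cast hk'
    have h1 : (k' : ℝ) < k := by exact_mod_cast Nat.lt_succ_self k'
    have := one_div_lt_one_div_of_lt h0 h1
    linarith
  obtain ⟨δ, hδ, n₁, h₁⟩ := exists_large_equipartite H k' (4 * t * m) hε hπ
  obtain ⟨n₂, h₂⟩ := eventually_card_le_of_biclique_free ht (c := γ / (4 * k)) (by positivity)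
  obtain ⟨n₃, h₃⟩ := exists_nat_ge (k * (M * (1 + 4 * t)) / (γ / 4))
  refine ⟨δ, hδ, max (max n₁ n₂) (max n₃ 1), fun n hn G hG he => ?_⟩
  simp only [max_le_iff] at hn
  obtain ⟨⟨hn₁, hn₂⟩, hn₃, hn0⟩ := hn
  have hn0' : (0 : ℝ) < n := by exact_mod_cast hn0
  have hfree : H.Free G := fun ⟨g⟩ => hG ⟨g.toHom, g.injective⟩
  have hex : (extremalNumber n H : ℝ) ≤ exNum n H := by
    exact_mod_cast extremalNumber_le_exNum n H
  obtain ⟨g, hg⟩ := h₁ n hn₁ G hfree (by linarith)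
  obtain ⟨B, f, hB, hf⟩ := exists_partition_of_equipartite (k := k) (T := 4 * t * m) (ε := ε)
    (φ := fun i a => g (i, a)) C hG
    (fun i a b hab => by simpa using g.injective hab)
    (fun i j hij a b => g.toHom.map_adj (by simpa [completeEquipartiteGraph] using hij))
    (by omega) ht rfl (le_max_right _ _) hεm
    (fun i a => le_trans (by gcongr) (hg (i, a)))
  rw [← htdef, ← hM] at hB
  refine ⟨f, ?_⟩
  have hi : ∀ i : Fin k, (edgesIn G (f ⁻¹' {i}) : ℝ) ≤ B.card * n + γ / (4 * k) * n ^ 2 := fun i =>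
    edgesIn_le_mul_add G _ B _ fun Q hQG hQ =>
      h₂ n hn₂ Q (hf i Q hQG fun u v huv => by simpa using hQ u v huv)
  have hsum : ((∑ i : Fin k, edgesIn G (f ⁻¹' {i}) : ℕ) : ℝ) ≤
      k * (B.card * n + γ / (4 * k) * n ^ 2) := by
    push_cast
    simpa only [Finset.card_univ, Fintype.card_fin, nsmul_eq_mul] using
      Finset.sum_le_card_nsmul Finset.univ _ _ fun i _ => hi i
  refine hsum.trans_lt ?_
  have h₃' : k * (M * (1 + 4 * t)) ≤ γ / 4 * n := by
    rw [div_le_iff₀ (by positivity)] at h₃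
    have : (n₃ : ℝ) ≤ n := by exact_mod_cast hn₃
    nlinarith
  have hkB : k * (B.card : ℝ) ≤ γ / 4 * n + γ / 4 * n := by
    calc k * (B.card : ℝ) ≤ k * (M * (1 + 4 * t) + 4 * t * (k + 1) * ε * n) := by gcongr
      _ = k * (M * (1 + 4 * t)) + k * (4 * t * (k + 1) * ε) * n := by ring
      _ ≤ _ := by rw [hεeq]; linarith
  have hkγ : k * (γ / (4 * k) * (n : ℝ) ^ 2) = γ / 4 * n ^ 2 := by field_simp
  have h4 := mul_le_mul_of_nonneg_right hkB hn0'.le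
  have h5 : 0 < γ * (n : ℝ) ^ 2 := by positivity
  rw [mul_add, hkγ]
  linarith
end

section
/- Let r ≥ 1 and let G be a graph with no isolated vertex such that for every vertex x of G, deg(x) + ν(G − N[x]) ≤ r, where G − N[x] is the subgraph of G induced on V(G) \ N[x]. Then e(G) ≤ r². -/
/-!
Let `x` be a vertex of maximum degree `d`, and let `M` be a maximum matching of `G - N[x]`, so that
`d + |M| ≤ r`. Every edge of `G` meets `N(x) ∪ V(M)`: an edge through `x` has its other end in
`N(x)`, and an edge missing `N[x] ∪ V(M)` could be added to `M`. This vertex cover has at most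
`d + 2|M|` elements, each of degree at most `d`, so `e(G) ≤ (d + 2(r - d)) d = r² - (r - d)² ≤ r²`.
-/

open SimpleGraph

/-- A matching attaining `nuSet E` exists and is maximal: every edge of `E` meets one of its edges.
-/
lemma exists_maximal_matching {V : Type*} [Fintype V] (E : Set (Sym2 V)) :
    ∃ M : Finset (Sym2 V), M.card = nuSet E ∧ ∀ e ∈ E, ∃ f ∈ M, ∃ v, v ∈ e ∧ v ∈ f := by
  classical
  set S : Set ℕ := {m | ∃ M : Finset (Sym2 V), ↑M ⊆ E ∧
    (M : Set (Sym2 V)).Pairwise (fun e f => ∀ v, v ∈ e → v ∉ f) ∧ M.card = m} with hS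
  have hb : BddAbove S := by
    refine ⟨Fintype.card (Sym2 V), ?_⟩
    rintro m ⟨M, -, -, rfl⟩
    exact Finset.card_le_univ M
  have hne : S.Nonempty := ⟨0, ∅, by simp, by simp, rfl⟩
  obtain ⟨M, hME, hMp, hMc⟩ := Nat.sSup_mem hne hb
  refine ⟨M, hMc, fun e he => ?_⟩
  by_contra! hcon
  have heM : e ∉ M := fun hM => by
    induction e with
    | h a b => exact hcon _ hM a (Sym2.mem_mk_left a b) (Sym2.mem_mk_left a b)
  have hmem : M.card + 1 ∈ S := by
    refine ⟨insert e M, ?_, ?_, Finset.card_insert_of_notMem heM⟩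
    · rw [Finset.coe_insert]
      exact Set.insert_subset he hME
    · rw [Finset.coe_insert]
      refine hMp.insert fun f hf _ => ⟨fun v hv => hcon f hf v hv, fun v hv hv' => ?_⟩
      exact hcon f hf v hv' hv
  have := le_csSup hb hmem
  omega

/-- **Main Lemma, inequality part.** If `G` has no isolated vertex and for every vertex
`x`, `deg(x) + ν(G - N[x]) ≤ r`, then `e(G) ≤ r²`. -/
theorem edge_bound_of_local_matching_condition {V : Type*} [Fintype V] (G : SimpleGraph V)
    (r : ℕ) (hr : 1 ≤ r) (hiso : ∀ v, ∃ w, G.Adj v w)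
    (h : ∀ x : V, (G.neighborSet x).ncard +
      nuSet {e | e ∈ G.edgeSet ∧ ∀ v ∈ e, v ≠ x ∧ v ∉ G.neighborSet x} ≤ r) :
    G.edgeSet.ncard ≤ r ^ 2 := by
  classical
  rcases isEmpty_or_nonempty V with hV | hV
  · have : G.edgeSet = ∅ := Set.eq_empty_of_isEmpty _
    simp [this]
  obtain ⟨x, hx⟩ := Finite.exists_max (fun v => G.degree v)
  obtain ⟨M, hMc, hM⟩ := exists_maximal_matching
    {e | e ∈ G.edgeSet ∧ ∀ v ∈ e, v ≠ x ∧ v ∉ G.neighborSet x}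
  have hdr : G.degree x + M.card ≤ r := by
    have h1 := h x
    rw [← hMc, Set.ncard_eq_toFinset_card', ← SimpleGraph.neighborFinset_def,
      SimpleGraph.card_neighborFinset_eq_degree] at h1
    exact h1
  let C : Finset V := G.neighborFinset x ∪ M.biUnion Sym2.toFinset
  have hC : C.card ≤ G.degree x + M.card * 2 := by
    refine (Finset.card_union_le _ _).trans ?_
    rw [SimpleGraph.card_neighborFinset_eq_degree]
    refine Nat.add_le_add_left (Finset.card_biUnion_le_card_mul _ _ _ fun e _ => ?_) _
    rw [Sym2.card_toFinset]
    split_ifs <;> omega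
  have hcover : G.edgeFinset ⊆ C.biUnion fun v => G.incidenceFinset v := by
    intro e he
    rw [SimpleGraph.mem_edgeFinset] at he
    suffices ∃ v ∈ C, v ∈ e by
      obtain ⟨v, hv, hve⟩ := this
      exact Finset.mem_biUnion.2 ⟨v, hv, by simpa using ⟨he, hve⟩⟩
    by_cases hN : ∃ v ∈ e, G.Adj x v
    · obtain ⟨v, hve, hxv⟩ := hN
      exact ⟨v, Finset.mem_union_left _ (by simpa using hxv), hve⟩
    push Not at hN
    have hxe : x ∉ e := by
      rintro ⟨y, rfl⟩
      exact hN y (Sym2.mem_mk_right x y) he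
    obtain ⟨f, hf, v, hve, hvf⟩ := hM e
      ⟨he, fun v hv => ⟨fun hvx => hxe (hvx ▸ hv), hN v hv⟩⟩
    exact ⟨v, Finset.mem_union_right _
      (Finset.mem_biUnion.2 ⟨f, hf, Sym2.mem_toFinset.2 hvf⟩), hve⟩
  have hcard : G.edgeFinset.card ≤ C.card * G.degree x :=
    (Finset.card_le_card hcover).trans <| Finset.card_biUnion_le_card_mul _ _ _ fun v _ => by
      rw [SimpleGraph.card_incidenceFinset_eq_degree]
      exact hx v
  rw [Set.ncard_eq_toFinset_card']
  change G.edgeFinset.card ≤ r ^ 2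
  obtain ⟨k, rfl⟩ := Nat.exists_eq_add_of_le hdr
  calc G.edgeFinset.card ≤ (G.degree x + M.card * 2) * G.degree x :=
        hcard.trans (Nat.mul_le_mul_right _ hC)
    _ ≤ (G.degree x + M.card) ^ 2 := by nlinarith [sq_nonneg M.card]
    _ ≤ (G.degree x + M.card + k) ^ 2 := Nat.pow_le_pow_left (Nat.le_add_right _ _) 2
end

section
/- Let r ≥ 1 and let G be a graph with no isolated vertex such that for every vertex x of G, deg(x) + ν(G − N[x]) ≤ r, where G − N[x] is the subgraph of G induced on V(G) \ N[x]. Then e(G) = r² if and only if G is isomorphic to the complete bipartite graph K_{r,r}. -/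
/-!
Let `x` be a vertex of maximum degree `Δ`, let `M` be a maximum matching of `G - N[x]` and
`s = |M|`. The set `C = N(x) ∪ V(M)` is a vertex cover of `G`: an edge avoiding `N(x)` also
avoids `x`, hence lies in `G - N[x]` and meets `V(M)` by maximality of `M`. Therefore
`e(G) ≤ |C| Δ ≤ (Δ + 2 s) Δ = (Δ + s)² - s²`, and `Δ + s ≤ r`. If `e(G) = r²`, this forces `s = 0`
and `Δ = r`, so `N(x)` is a vertex cover of size `r`
(`neighborFinset_cover_of_max_degree`).

A vertex cover of size `r` in a graph with `r²` edges and all degrees at most `r` is independent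
and consists of vertices of degree `r` (`tight_cover`). Hence `A = N(x)` and its complement `B` are
independent. Each `y ∈ A` again has maximum degree, so `N(y) ⊆ B` is a vertex cover too; a vertex
of `B` missed by `N(y)` would be isolated. So `N(y) = B` for all `y ∈ A`, i.e. `G` is `K_{r,r}`.
-/

open SimpleGraph

/-- `nuSet` is attained by a matching, which meets every edge of the set by maximality. -/
lemma exists_max_matching {V : Type*} [Fintype V] [DecidableEq V] (E : Set (Sym2 V)) :
    ∃ M : Finset (Sym2 V), M.card = nuSet E ∧
      ∀ e ∈ E, ∃ f ∈ M, ∃ v, v ∈ e ∧ v ∈ f := by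
  set S := {m | ∃ M : Finset (Sym2 V), ↑M ⊆ E ∧
    (M : Set (Sym2 V)).Pairwise (fun e f => ∀ v, v ∈ e → v ∉ f) ∧ M.card = m} with hS
  have hbdd : BddAbove S := by
    refine ⟨Fintype.card (Sym2 V), ?_⟩
    rintro m ⟨M, -, -, rfl⟩
    exact Finset.card_le_univ M
  have hne : S.Nonempty := ⟨0, ∅, by simp, by simp, by simp⟩
  obtain ⟨M, hME, hMp, hMc⟩ := Nat.sSup_mem hne hbdd
  refine ⟨M, hMc, fun e he => ?_⟩
  by_contra! hcon
  have heM : e ∉ M := by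
    intro heM
    induction e with
    | _ a b => exact hcon _ heM a (by simp) (by simp)
  have hmem : (insert e M).card ∈ S := by
    refine ⟨insert e M, ?_, ?_, rfl⟩
    · rw [Finset.coe_insert]
      exact Set.insert_subset he hME
    · rw [Finset.coe_insert]
      refine hMp.insert fun f hf _ => ⟨fun v hv => hcon f hf v hv, fun v hv hv2 => ?_⟩
      exact hcon f hf v hv2 hv
  have := le_csSup hbdd hmem
  rw [Finset.card_insert_of_notMem heM, ← hMc] at this
  omega

lemma card_edgeFinset_le_of_cover {V : Type*} [Fintype V] [DecidableEq V]
    (G : SimpleGraph V) [DecidableRel G.Adj] (C : Finset V)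
    (hC : ∀ a b, G.Adj a b → a ∈ C ∨ b ∈ C) :
    G.edgeFinset.card ≤ ∑ v ∈ C, G.degree v := by
  have hsub : G.edgeFinset ⊆ C.biUnion (fun v => G.incidenceFinset v) := by
    intro e he
    induction e with
    | _ a b =>
      rw [SimpleGraph.mem_edgeFinset, SimpleGraph.mem_edgeSet] at he
      rw [Finset.mem_biUnion]
      rcases hC a b he with h | h
      · exact ⟨a, h, by simp [SimpleGraph.incidenceSet, he]⟩
      · exact ⟨b, h, by simp [SimpleGraph.incidenceSet, he]⟩
  refine (Finset.card_le_card hsub).trans (Finset.card_biUnion_le.trans ?_)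
  simp

/-- In the extremal case, the neighbourhood of a vertex of maximum degree is a vertex cover of
size `r`. -/
lemma neighborFinset_cover_of_max_degree {V : Type*} [Fintype V] [DecidableEq V]
    (G : SimpleGraph V) [DecidableRel G.Adj] (r : ℕ) (x : V)
    (hmax : ∀ v, G.degree v ≤ G.degree x)
    (h : G.degree x +
      nuSet {e | e ∈ G.edgeSet ∧ ∀ v ∈ e, v ≠ x ∧ v ∉ G.neighborSet x} ≤ r)
    (he : G.edgeFinset.card = r ^ 2) :
    G.degree x = r ∧ ∀ a b, G.Adj a b → G.Adj x a ∨ G.Adj x b := by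
  obtain ⟨M, hMc, hM⟩ := exists_max_matching
    {e | e ∈ G.edgeSet ∧ ∀ v ∈ e, v ≠ x ∧ v ∉ G.neighborSet x}
  rw [← hMc] at h
  set C := G.neighborFinset x ∪ M.biUnion Sym2.toFinset with hCdef
  have hcov : ∀ a b, G.Adj a b → a ∈ C ∨ b ∈ C := by
    intro a b hab
    by_cases ha : G.Adj x a
    · left; simp [hCdef, ha]
    by_cases hb : G.Adj x b
    · right; simp [hCdef, hb]
    have hax : a ≠ x := by rintro rfl; exact hb hab
    have hbx : b ≠ x := by rintro rfl; exact ha hab.symm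
    obtain ⟨f, hf, v, hv, hvf⟩ := hM s(a, b) ⟨hab, by
      intro v hv
      rcases Sym2.mem_iff.1 hv with rfl | rfl
      · exact ⟨hax, ha⟩
      · exact ⟨hbx, hb⟩⟩
    have hvC : v ∈ C := by
      rw [hCdef, Finset.mem_union, Finset.mem_biUnion]
      exact Or.inr ⟨f, hf, by simpa using hvf⟩
    rcases Sym2.mem_iff.1 hv with rfl | rfl
    · exact Or.inl hvC
    · exact Or.inr hvC
  have hCcard : C.card ≤ G.degree x + M.card * 2 := by
    refine (Finset.card_union_le _ _).trans ?_
    rw [SimpleGraph.card_neighborFinset_eq_degree]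
    refine Nat.add_le_add_left (Finset.card_biUnion_le_card_mul _ _ _ fun f _ => ?_) _
    rw [Sym2.card_toFinset]
    split_ifs <;> simp
  have h1 := card_edgeFinset_le_of_cover G C hcov
  have h2 : ∑ v ∈ C, G.degree v ≤ C.card * G.degree x :=
    Finset.sum_le_card_nsmul _ _ _ fun v _ => hmax v
  have h3 : r ^ 2 ≤ (G.degree x + M.card * 2) * G.degree x := by
    rw [← he]
    exact h1.trans (h2.trans (Nat.mul_le_mul_right _ hCcard))
  have hs : M.card = 0 := by nlinarith
  have hr : G.degree x = r := by
    rw [hs] at h h3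
    nlinarith
  refine ⟨hr, fun a b hab => ?_⟩
  rw [Finset.card_eq_zero] at hs
  simpa [hCdef, hs] using hcov a b hab

/-- Every edge of `G` is counted at least once in `∑ v ∈ C, deg v ≤ r²`; a vertex of smaller degree
or an edge inside `C`, counted twice, would make the bound strict. -/
lemma tight_cover {V : Type*} [Fintype V] [DecidableEq V]
    (G : SimpleGraph V) [DecidableRel G.Adj] (r : ℕ) (C : Finset V)
    (hdeg : ∀ v, G.degree v ≤ r) (hcard : C.card = r)
    (hC : ∀ a b, G.Adj a b → a ∈ C ∨ b ∈ C) (he : G.edgeFinset.card = r ^ 2) :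
    ∀ y ∈ C, G.degree y = r ∧ ∀ z ∈ C, ¬ G.Adj y z := by
  intro y hy
  have hrest : ∑ v ∈ C.erase y, G.degree v ≤ (r - 1) * r := by
    have := Finset.sum_le_card_nsmul (C.erase y) (fun v => G.degree v) r fun v _ => hdeg v
    rwa [Finset.card_erase_of_mem hy, hcard, smul_eq_mul] at this
  have hr : 1 ≤ r := hcard ▸ Finset.card_pos.2 ⟨y, hy⟩
  have hsq : r ^ 2 = (r - 1) * r + r := by
    obtain ⟨k, rfl⟩ := Nat.exists_eq_add_of_le' hr
    simp only [Nat.add_sub_cancel]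
    ring
  constructor
  · have h1 := card_edgeFinset_le_of_cover G C hC
    rw [← Finset.add_sum_erase C _ hy] at h1
    have := hdeg y
    omega
  · intro z hz hyz
    -- The edge `yz` is already covered by `z ∈ C \ {y}`, so `y` needs to account only for its
    -- other edges.
    have hsub : G.edgeFinset ⊆ (C.erase y).biUnion (fun v => G.incidenceFinset v) ∪
        (G.incidenceFinset y).erase s(y, z) := by
      intro e hee
      induction e with
      | _ a b =>
        have key : ∀ u w, G.Adj u w → u ∈ C → s(u, w) ∈
            (C.erase y).biUnion (fun v => G.incidenceFinset v) ∪ (G.incidenceFinset y).erase s(y, z) := by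
          intro u w huw hu
          rw [Finset.mem_union, Finset.mem_biUnion]
          by_cases huy : u = y
          · subst huy
            by_cases hwz : w = z
            · subst hwz
              left
              exact ⟨w, by simp [hz, huw.ne'], by simp [SimpleGraph.incidenceSet, huw]⟩
            · right
              have huz : u ≠ z := hyz.ne
              simp [SimpleGraph.incidenceSet, huw, hwz, huz]
          · left
            exact ⟨u, by simp [hu, huy], by simp [SimpleGraph.incidenceSet, huw]⟩
        rw [SimpleGraph.mem_edgeFinset, SimpleGraph.mem_edgeSet] at hee
        rcases hC a b hee with h | h
        · exact key a b hee h
        · rw [Sym2.eq_swap (a := a)]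
          exact key b a hee.symm h
    have h1 := (Finset.card_le_card hsub).trans (Finset.card_union_le _ _)
    have h2 : ((C.erase y).biUnion (fun v => G.incidenceFinset v)).card ≤ ∑ v ∈ C.erase y, G.degree v := by
      refine Finset.card_biUnion_le.trans ?_
      simp
    have h3 : s(y, z) ∈ G.incidenceFinset y := by simp [SimpleGraph.incidenceSet, hyz]
    rw [Finset.card_erase_of_mem h3, SimpleGraph.card_incidenceFinset_eq_degree] at h1
    have := hdeg y
    omega

lemma iso_completeBipartiteGraph {V : Type*} [Fintype V] [DecidableEq V]
    (G : SimpleGraph V) (r : ℕ) (A : Finset V) (hA : A.card = r) (hB : Aᶜ.card = r)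
    (hadj : ∀ a b, G.Adj a b ↔ (a ∈ A ∧ b ∉ A ∨ a ∉ A ∧ b ∈ A)) :
    Nonempty (G ≃g completeBipartiteGraph (Fin r) (Fin r)) := by
  have e1 : {a // a ∈ A} ≃ Fin r := Fintype.equivFinOfCardEq (by simpa using hA)
  have e2 : {a // ¬ a ∈ A} ≃ Fin r := Fintype.equivFinOfCardEq (by
    rw [Fintype.card_subtype_compl, ← hB, Finset.card_compl]; simp)
  let φ : Fin r ⊕ Fin r ≃ V :=
    (Equiv.sumCongr e1.symm e2.symm).trans (Equiv.sumCompl (fun a => a ∈ A))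
  have hl : ∀ i, φ (Sum.inl i) ∈ A := fun i => (e1.symm i).2
  have hr : ∀ i, φ (Sum.inr i) ∉ A := fun i => (e2.symm i).2
  refine ⟨(RelIso.symm ⟨φ, ?_⟩ : G ≃g completeBipartiteGraph (Fin r) (Fin r))⟩
  rintro (i | i) (j | j) <;> simp [hadj, hl, hr]

/-- **Main Lemma, equality part.** If `G` has no isolated vertex and for every vertex
`x`, `deg(x) + ν(G - N[x]) ≤ r`, then `e(G) = r²` if and only if `G ≅ K_{r,r}`. -/
theorem edge_bound_equality_iff_complete_bipartite {V : Type*} [Fintype V]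
    (G : SimpleGraph V) (r : ℕ) (hr : 1 ≤ r) (hiso : ∀ v, ∃ w, G.Adj v w)
    (h : ∀ x : V, (G.neighborSet x).ncard +
      nuSet {e | e ∈ G.edgeSet ∧ ∀ v ∈ e, v ≠ x ∧ v ∉ G.neighborSet x} ≤ r) :
    G.edgeSet.ncard = r ^ 2 ↔
      Nonempty (G ≃g completeBipartiteGraph (Fin r) (Fin r)) := by
  classical
  have hcard : G.edgeSet.ncard = G.edgeFinset.card := by
    rw [← SimpleGraph.coe_edgeFinset, Set.ncard_coe_finset]
  have hn : ∀ x, (G.neighborSet x).ncard = G.degree x := by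
    intro x
    rw [Set.ncard_eq_toFinset_card', ← SimpleGraph.neighborFinset_def,
      SimpleGraph.card_neighborFinset_eq_degree]
  simp only [hn] at h
  rw [hcard]
  constructor
  · intro he
    have hne : Nonempty V := by
      by_contra hV
      rw [not_nonempty_iff] at hV
      have : G.edgeFinset.card = 0 := by
        rw [Finset.card_eq_zero, Finset.eq_empty_iff_forall_notMem]
        intro e
        induction e with
        | _ a b => exact hV.elim a
      have : 0 < r ^ 2 := by positivity
      omega
    have hdeg : ∀ v, G.degree v ≤ r := fun v => by have := h v; omega
    obtain ⟨x, hx⟩ := Finite.exists_max (fun v => G.degree v)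
    obtain ⟨hxr, hxc⟩ := neighborFinset_cover_of_max_degree G r x hx (h x) he
    have hA := tight_cover G r (G.neighborFinset x) hdeg (by simpa using hxr)
      (by simpa using hxc) he
    simp only [SimpleGraph.mem_neighborFinset] at hA
    have hN : ∀ y, G.Adj x y → ∀ b, G.Adj y b ↔ ¬ G.Adj x b := by
      intro y hy b
      refine ⟨fun hyb hb => (hA y hy).2 b hb hyb, fun hb => ?_⟩
      obtain ⟨-, hyc⟩ := neighborFinset_cover_of_max_degree G r y
        (fun v => (hA y hy).1 ▸ hdeg v) (h y) he
      -- A neighbour `a` of `b` lies in `N(x)`, so the edge `ab` can only be covered at `b`.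
      obtain ⟨a, hba⟩ := hiso b
      have hxa : G.Adj x a := (hxc b a hba).resolve_left hb
      exact (hyc b a hba).resolve_right ((hA y hy).2 a hxa)
    refine iso_completeBipartiteGraph G r (G.neighborFinset x) (by simpa using hxr) ?_ ?_
    · obtain ⟨y, hy⟩ := hiso x
      have : (G.neighborFinset x)ᶜ = G.neighborFinset y := by
        ext b
        simp [hN y hy b]
      rw [this, SimpleGraph.card_neighborFinset_eq_degree]
      exact (hA y hy).1
    · intro a b
      simp only [SimpleGraph.mem_neighborFinset]
      constructor
      · intro hab
        by_cases ha : G.Adj x a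
        · exact Or.inl ⟨ha, (hN a ha b).1 hab⟩
        · exact Or.inr ⟨ha, (hxc a b hab).resolve_left ha⟩
      · rintro (⟨ha, hb⟩ | ⟨ha, hb⟩)
        · exact (hN a ha b).2 hb
        · exact ((hN b hb a).2 ha).symm
  · rintro ⟨φ⟩
    rw [φ.card_edgeFinset_eq]
    have hK : (completeBipartiteGraph (Fin r) (Fin r)).edgeFinset =
        (Finset.univ : Finset (Fin r × Fin r)).image (fun p => s(Sum.inl p.1, Sum.inr p.2)) := by
      ext e
      induction e with
      | _ a b => rcases a with a | a <;> rcases b with b | b <;> simp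
    rw [hK, Finset.card_image_of_injective _ (by rintro ⟨a, b⟩ ⟨c, d⟩; simp)]
    simp [sq]
end

section
/- For every integer k ≥ 2, every odd integer q ≥ 5, and every n ≥ 4(k−1)², each member of 𝓕_{n,k} is C_{k,q}-free; that is, a graph obtained from the Turán graph T_{n,2} by adding the edges of a complete bipartite graph K_{k−1,k−1} on 2(k−1) vertices inside one of its two classes contains no subgraph isomorphic to C_{k,q}. -/
/-!
The edges of `Fgraph n k` that do not cross between the two parity classes form a complete
bipartite graph with sides `S` and `T` of size `k - 1` each. An odd cycle cannot consist of
crossing edges only, so every one of the `k` cycles of a copy of `C_{k,q}` uses an inner edge and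
therefore meets both `S` and `T`. As `S` and `T` are disjoint, the image of the center misses one
of them, say `X`. Then each cycle has a non-central vertex in `X`
(`exists_petal_mem_side`), and these `k` vertices are distinct because the cycles share only the
center, which contradicts `|X| = k - 1` (`side_contains_center`).
-/


open SimpleGraph

/-- The even vertices `2 * a, 2 * (a + 1), …, 2 * (a + k - 2)`. For `a = 0` and `a = k - 1` these
are the two sides of the `K_{k-1,k-1}` embedded in `Fgraph n k`. -/
def InSide (k a x : ℕ) : Prop := ∃ s, a ≤ s ∧ s < a + (k - 1) ∧ x = 2 * s

/-- An edge of `Fgraph n k` avoiding one side of the embedded `K_{k-1,k-1}` is an edge of the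
Turán graph. -/
lemma mod_two_ne_of_adj {n k a : ℕ} (ha : a = 0 ∨ a = k - 1) {u v : Fin n}
    (h : (Fgraph n k).Adj u v) (hu : ¬ InSide k a u) (hv : ¬ InSide k a v) :
    (u : ℕ) % 2 ≠ (v : ℕ) % 2 := by
  rw [Fgraph, SimpleGraph.fromRel_adj] at h
  obtain ⟨-, (h | ⟨s, t, h1, h2, h3, h4, h5⟩) | (h | ⟨s, t, h1, h2, h3, h4, h5⟩)⟩ := h
  · exact h
  · exfalso
    rcases ha with rfl | rfl
    · exact hu ⟨s, by omega, by omega, h4⟩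
    · exact hv ⟨t, by omega, by omega, h5⟩
  · exact h.symm
  · exfalso
    rcases ha with rfl | rfl
    · exact hv ⟨s, by omega, by omega, h4⟩
    · exact hu ⟨t, by omega, by omega, h5⟩

/-- If the center of a copy of `C_{k,q}` avoids a side, then every cycle meets that side in a
non-central vertex: otherwise parities would alternate along a cycle of odd length. -/
lemma exists_petal_mem_side {n k q a : ℕ} (hq : 5 ≤ q) (hqodd : Odd q)
    (ha : a = 0 ∨ a = k - 1) (f : Ckq k q →g Fgraph n k) (hc : ¬ InSide k a (f none))
    (i : Fin k) : ∃ j, InSide k a (f (some (i, j))) := by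
  by_contra! hno
  have hend : ∀ j : Fin (q - 1), ((j : ℕ) = 0 ∨ (j : ℕ) = q - 2) →
      (f none : ℕ) % 2 ≠ (f (some (i, j)) : ℕ) % 2 := fun j hj =>
    mod_two_ne_of_adj ha (f.map_adj (by simpa [Ckq, CkqRel] using hj)) hc (hno j)
  have hstep : ∀ j j' : Fin (q - 1), (j' : ℕ) = j + 1 →
      (f (some (i, j)) : ℕ) % 2 ≠ (f (some (i, j')) : ℕ) % 2 := fun j j' hj =>
    mod_two_ne_of_adj ha (f.map_adj (by
      rw [Ckq, SimpleGraph.fromRel_adj]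
      refine ⟨fun h => ?_, Or.inl ⟨rfl, hj⟩⟩
      simp only [Option.some.injEq, Prod.mk.injEq, true_and] at h
      rw [h] at hj
      omega)) (hno j) (hno j')
  have key : ∀ m (hm : m < q - 1),
      (f (some (i, ⟨m, hm⟩)) : ℕ) % 2 = ((f none : ℕ) + m + 1) % 2 := by
    intro m
    induction m with
    | zero =>
      intro hm
      have := hend ⟨0, hm⟩ (Or.inl rfl)
      omega
    | succ m ih =>
      intro hm
      have h1 := ih (by omega)
      have h2 := hstep ⟨m, by omega⟩ ⟨m + 1, hm⟩ rfl
      omega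
  obtain ⟨r, rfl⟩ := hqodd
  have h1 := key (2 * r + 1 - 2) (by omega)
  have h2 := hend ⟨2 * r + 1 - 2, by omega⟩ (Or.inr rfl)
  omega

/-- The center of a copy of `C_{k,q}` in `Fgraph n k` lies in both sides of the embedded
`K_{k-1,k-1}`, because the `k` cycles cannot all have a private vertex in a side of size
`k - 1`. -/
lemma side_contains_center {n k q a : ℕ} (hk : 2 ≤ k) (hq : 5 ≤ q) (hqodd : Odd q)
    (ha : a = 0 ∨ a = k - 1) (f : Ckq k q →g Fgraph n k) (hf : Function.Injective f) :
    InSide k a (f none) := by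
  by_contra hc
  choose j s hs1 hs2 hs3 using exists_petal_mem_side hq hqodd ha f hc
  have hcard := Finset.card_le_card_of_injOn (s := Finset.univ)
    (t := Finset.Ico a (a + (k - 1))) s (fun i _ => by simp [hs1, hs2]) (by
      intro i _ i' _ h
      have h' : f (some (i, j i)) = f (some (i', j i')) := Fin.ext (by rw [hs3, hs3, h])
      simpa using congrArg (Option.map Prod.fst) (hf h'))
  simp only [Finset.card_univ, Fintype.card_fin, Nat.card_Ico] at hcard
  omega

/-- **Lemma.** For `k ≥ 2`, odd `q ≥ 5` and `n ≥ 4(k-1)²`, the member of `𝓕_{n,k}`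
(the Turán graph `T_{n,2}` with a `K_{k-1,k-1}` embedded in one class) is
`C_{k,q}`-free. -/
theorem Fgraph_Ckq_free (k q n : ℕ) (hk : 2 ≤ k) (hq : 5 ≤ q) (hqodd : Odd q)
    (hn : 4 * (k - 1) ^ 2 ≤ n) :
    ¬ ContainsCopy (Ckq k q) (Fgraph n k) := by
  rintro ⟨f, hf⟩
  obtain ⟨s, h1, h2, h3⟩ := side_contains_center hk hq hqodd (Or.inl rfl) f hf
  obtain ⟨t, h4, h5, h6⟩ := side_contains_center hk hq hqodd (Or.inr rfl) f hf
  omega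
end

section
/- Let n₀ be a positive integer and let G be a graph on n ≥ n₀ + C(n₀,2) vertices with e(G) = ⌊n²/4⌋ + j for some integer j > 0. Then G contains an induced subgraph G′ on n′ > n₀ vertices such that δ(G′) ≥ ⌊n′/2⌋ and e(G′) ≥ ⌊n′²/4⌋ + j + (n − n′). -/
/-!
Among the vertex sets `s` with `⌊|s|²/4⌋ + j + (n - |s|) ≤ e(G[s])`, a family containing the whole
vertex set, take one of minimum cardinality. If some `v ∈ s` had degree less than `⌊|s|/2⌋` in
`G[s]`, then deleting it would lose at most `⌊|s|/2⌋ - 1` edges (`edgesIn_le_erase`). Since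
`⌊m²/4⌋ - ⌊(m-1)²/4⌋ = ⌊m/2⌋`, the excess over the Turán number would grow by at least one, and
`s \ {v}` would be a smaller member of the family. Moreover no member of the family has at most
`n₀` vertices: it would span more than `n - n₀ ≥ C(n₀,2)` edges, and so more than the number of
available pairs (`edgesIn_le_choose_two`).
-/

open SimpleGraph

theorem edgesIn_le_choose_two {V : Type*} (G : SimpleGraph V) (s : Finset V) :
    edgesIn G (↑s) ≤ s.card.choose 2 := by
  classical
  rw [← Sym2.card_image_offDiag, ← Set.ncard_coe_finset]
  refine Set.ncard_le_ncard ?_ (Finset.finite_toSet _)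
  rintro e ⟨he, hs⟩
  induction e with
  | h a b =>
    have hab : G.Adj a b := he
    have ha : a ∈ s := hs a (by simp)
    have hb : b ∈ s := hs b (by simp)
    exact Finset.mem_coe.2 (Finset.mem_image.2
      ⟨(a, b), Finset.mem_offDiag.2 ⟨ha, hb, hab.ne⟩, rfl⟩)

theorem edgesIn_le_erase {V : Type*} [Finite V] [DecidableEq V] (G : SimpleGraph V)
    (s : Finset V) (v : V) :
    edgesIn G (↑s) ≤ edgesIn G (↑(s.erase v)) + degIn G (↑s) v := by
  have hsub : inEdges G (↑s) ⊆
      inEdges G (↑(s.erase v)) ∪ (fun w => s(v, w)) '' (G.neighborSet v ∩ ↑s) := by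
    rintro e ⟨he, hs⟩
    by_cases hv : v ∈ e
    · right
      obtain ⟨w, rfl⟩ := hv
      exact ⟨w, ⟨he, hs w (by simp)⟩, rfl⟩
    · left
      refine ⟨he, fun w hw => ?_⟩
      have hwv : w ≠ v := fun h => hv (h ▸ hw)
      exact Finset.mem_coe.2 (Finset.mem_erase.2 ⟨hwv, hs w hw⟩)
  calc edgesIn G (↑s) ≤ _ := Set.ncard_le_ncard hsub (Set.toFinite _)
    _ ≤ _ := Set.ncard_union_le _ _
    _ ≤ _ := Nat.add_le_add_left (Set.ncard_image_le (Set.toFinite _)) _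

/-- The Turán number `⌊m²/4⌋` of the triangle increases by `⌊m/2⌋`, the minimum degree of
`T_{m,2}`, from `m - 1` to `m`. -/
theorem succ_sq_div_four (k : ℕ) : (k + 1) ^ 2 / 4 = k ^ 2 / 4 + (k + 1) / 2 := by
  obtain ⟨a, rfl | rfl⟩ := Nat.even_or_odd' k
  · have h1 : (2 * a + 1) ^ 2 = 4 * (a ^ 2 + a) + 1 := by ring
    have h2 : (2 * a) ^ 2 = 4 * a ^ 2 := by ring
    omega
  · have h1 : (2 * a + 1 + 1) ^ 2 = 4 * (a ^ 2 + 2 * a + 1) := by ring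
    have h2 : (2 * a + 1) ^ 2 = 4 * (a ^ 2 + a) + 1 := by ring
    omega

/-- **Lemma.** Let `n₀ > 0` and let `G` be a graph on `n ≥ n₀ + C(n₀,2)` vertices with
`e(G) = ⌊n²/4⌋ + j` for some `j > 0`. Then `G` has an induced subgraph `G'` on
`n' > n₀` vertices with `δ(G') ≥ ⌊n'/2⌋` and `e(G') ≥ ⌊n'²/4⌋ + j + (n - n')`. -/
theorem exists_induced_subgraph_large_min_degree {V : Type*} [Fintype V]
    (G : SimpleGraph V) (n n₀ j : ℕ) (hn : Fintype.card V = n) (hn₀ : 0 < n₀)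
    (hbig : n₀ + n₀.choose 2 ≤ n) (he : G.edgeSet.ncard = n ^ 2 / 4 + j) (hj : 0 < j) :
    ∃ s : Finset V, n₀ < s.card ∧
      (∀ v ∈ s, s.card / 2 ≤ degIn G (↑s) v) ∧
      s.card ^ 2 / 4 + j + (n - s.card) ≤ edgesIn G ↑s := by
  classical
  let P : Finset V → Prop := fun s => s.card ^ 2 / 4 + j + (n - s.card) ≤ edgesIn G ↑s
  have huniv : P Finset.univ := by
    have hE : inEdges G (↑(Finset.univ : Finset V)) = G.edgeSet := by
      ext e
      simp [inEdges]
    simp only [P, edgesIn, hE, Finset.card_univ, hn, he]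
    omega
  obtain ⟨s, hs, hmin⟩ := Finset.exists_min_image (Finset.univ.filter P) Finset.card
    ⟨Finset.univ, by simpa using huniv⟩
  have hPs : P s := (Finset.mem_filter.1 hs).2
  have hcard : s.card ≤ n := hn ▸ Finset.card_le_univ s
  refine ⟨s, ?_, fun v hv => ?_, hPs⟩
  · by_contra! hle
    have h1 := edgesIn_le_choose_two G s
    have h2 : s.card.choose 2 ≤ n₀.choose 2 := Nat.choose_le_choose 2 hle
    simp only [P] at hPs
    omega
  · by_contra! hlt
    have h1 := edgesIn_le_erase G s v
    have h2 := Finset.card_erase_add_one hv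
    have h3 := succ_sq_div_four (s.erase v).card
    rw [h2] at h3
    have hP : P (s.erase v) := by
      simp only [P] at hPs ⊢
      omega
    have h4 := hmin (s.erase v) (by simpa using hP)
    omega
end

section
/- Let k ≥ 1 and let G be a graph on n vertices with e(G) ≥ ⌊n²/4⌋ + (k−1)², and let V₀ ∪ V₁ be a partition of V(G) with e(V₀) + e(V₁) = (k−1)². Then ||V₀| − |V₁|| ≤ 1 and every vertex of V₀ is adjacent to every vertex of V₁; that is, G contains a complete balanced bipartite graph with classes V₀ and V₁. -/
/-!
Every edge not inside `V₀` or `V₁` crosses the partition, so with `a = |V₀|` and `b = |V₁|` the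
hypotheses force at least `⌊n²/4⌋` of the `a * b` pairs in `V₀ × V₁` to be adjacent. Since
`a + b = n`, the bound `⌊n²/4⌋ ≤ a * b` gives `(a - b)² ≤ 3`, hence `|a - b| ≤ 1`; and
`a * b ≤ ⌊n²/4⌋` always holds, so every pair is adjacent.
-/

open SimpleGraph

/-- **Claim 1, equality case.** If `e(G) ≥ ⌊n²/4⌋ + (k-1)²` and `V₀ ∪ V₁` is a
partition with `e(V₀) + e(V₁) = (k-1)²`, then the partition is balanced
(`||V₀| - |V₁|| ≤ 1`) and every vertex of `V₀` is adjacent to every vertex of `V₁`. -/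
theorem balanced_complete_bipartite_of_equality {V : Type*} [Fintype V]
    (G : SimpleGraph V) (n k : ℕ) (hk : 1 ≤ k) (hn : Fintype.card V = n)
    (he : n ^ 2 / 4 + (k - 1) ^ 2 ≤ G.edgeSet.ncard)
    (V₀ V₁ : Set V) (hunion : V₀ ∪ V₁ = Set.univ) (hdisj : Disjoint V₀ V₁)
    (hm : edgesIn G V₀ + edgesIn G V₁ = (k - 1) ^ 2) :
    ((V₀.ncard : ℤ) - (V₁.ncard : ℤ)).natAbs ≤ 1 ∧
    ∀ u ∈ V₀, ∀ v ∈ V₁, G.Adj u v := by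
  classical
  -- `P` is the set of adjacent pairs; it counts the edges crossing the partition.
  set P : Set (V × V) := {p | p ∈ V₀ ×ˢ V₁ ∧ G.Adj p.1 p.2} with hP
  have hPsub : P ⊆ V₀ ×ˢ V₁ := fun p hp => hp.1
  have hcover : G.edgeSet ⊆ (inEdges G V₀ ∪ inEdges G V₁) ∪ (fun p : V × V => s(p.1, p.2)) '' P := by
    intro e
    induction e using Sym2.ind with
    | _ x y =>
      intro hxy
      have hside : ∀ z, z ∈ V₀ ∨ z ∈ V₁ := fun z => by
        rw [← Set.mem_union, hunion]
        trivial
      have hadj : G.Adj x y := hxy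
      rcases hside x with hx | hx <;> rcases hside y with hy | hy
      · refine Or.inl (Or.inl ⟨hxy, ?_⟩)
        simp [hx, hy]
      · exact Or.inr ⟨(x, y), ⟨⟨hx, hy⟩, hadj⟩, rfl⟩
      · exact Or.inr ⟨(y, x), ⟨⟨hy, hx⟩, hadj.symm⟩, Sym2.eq_swap⟩
      · refine Or.inl (Or.inr ⟨hxy, ?_⟩)
        simp [hx, hy]
  have hcount : G.edgeSet.ncard ≤ edgesIn G V₀ + edgesIn G V₁ + P.ncard := by
    have h₁ := Set.ncard_le_ncard hcover (Set.toFinite _)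
    have h₂ := Set.ncard_union_le (inEdges G V₀ ∪ inEdges G V₁)
      ((fun p : V × V => s(p.1, p.2)) '' P)
    have h₃ := Set.ncard_union_le (inEdges G V₀) (inEdges G V₁)
    have h₄ := Set.ncard_image_le (f := fun p : V × V => s(p.1, p.2)) (Set.toFinite P)
    unfold edgesIn
    omega
  have hprod : (V₀ ×ˢ V₁).ncard = V₀.ncard * V₁.ncard := Set.ncard_prod
  have hPle : P.ncard ≤ V₀.ncard * V₁.ncard :=
    hprod ▸ Set.ncard_le_ncard hPsub (Set.toFinite _)
  have hsum : V₀.ncard + V₁.ncard = n := by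
    rw [← Set.ncard_union_eq hdisj (Set.toFinite _) (Set.toFinite _), hunion,
      Set.ncard_univ, Nat.card_eq_fintype_card, hn]
  have hlow : n ^ 2 / 4 ≤ P.ncard := by omega
  generalize V₀.ncard = a at *
  generalize V₁.ncard = b at *
  constructor
  · -- The floor loses at most `3/4`, so `(a - b)² = n² - 4ab ≤ 3`.
    have hsq : n ^ 2 ≤ 4 * (a * b) + 3 := by omega
    subst hsum
    zify at hsq
    have h₁ : (a : ℤ) - b < 2 := by nlinarith
    have h₂ : -2 < (a : ℤ) - b := by nlinarith
    omega
  · have hupp : a * b ≤ n ^ 2 / 4 := by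
      rw [Nat.le_div_iff_mul_le (by norm_num), ← hsum]
      zify
      nlinarith [sq_nonneg ((a : ℤ) - b)]
    have hPeq : P = V₀ ×ˢ V₁ :=
      Set.eq_of_subset_of_ncard_le hPsub (by omega) (Set.toFinite _)
    intro u hu v hv
    have huv : (u, v) ∈ P := hPeq ▸ Set.mk_mem_prod hu hv
    exact huv.2
end

section
/- For every integer k ≥ 2 and every odd integer q ≥ 5 there exists N such that for all n ≥ N the following holds. Let G be a C_{k,q}-free graph on n vertices with e(G) ≥ ⌊n²/4⌋ + (k−1)² and δ(G) ≥ ⌊n/2⌋, let V(G) = V₀ ∪ V₁ be a partition maximizing the number of crossing edges e(V₀,V₁), and suppose e(V₀) + e(V₁) < n²/1600. Write Gᵢ = G[Vᵢ], and for x ∈ Vᵢ let E_{1−i}(x) denote the set of edges of G_{1−i} having at least one endpoint adjacent to x in G. Then for each i ∈ {0,1} and every vertex x ∈ Vᵢ: deg_{Gᵢ}(x) + ν(Gᵢ − N_{Gᵢ}[x]) + ν(G[E_{1−i}(x)]) ≤ k − 1, where G[E_{1−i}(x)] is the subgraph formed by the edges in E_{1−i}(x). -/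
/-!
Let `x` violate the bound. Its neighbours in its own class, a maximum matching of that class away
from `N[x]`, and a maximum matching of `E(x)` in the other class are together at least `k`
disjoint seeds, and a copy of `C_{k,q}` centred at `x` is obtained by closing each seed to a
`q`-cycle through `x` with a path of crossing edges, the cycles being disjoint apart from `x`.
Each cycle uses exactly one edge inside a class, so the parities fit because `q` is odd, and
`q ≥ 5` leaves room for the connecting paths.

The connecting paths exist once any two vertices of the same class have many common neighbours in
the other class (`Linked`). To obtain this, count: the number of crossing edges is within
`n² / 1600` of its maximum `n² / 4`, so both classes have at least `19n / 40` vertices, and fewer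
than `n / 80` vertices per class are *bad*, that is, miss more than `n / 20` vertices of the
other class (`balanced_of_many_cross`). The vertices that are not bad are linked among themselves
(`linked_not_bad`). If some vertex `x` had `n / 80 + k` neighbours in its own class, then, the cut
being maximum, it would have as many in the other class; after discarding bad vertices, `k`
neighbours from each class remain, and joining them in pairs by paths of length `q - 2` gives a
copy of `C_{k,q}` (`Linked.containsCopy`). So all degrees inside the classes are small, and the
minimum degree condition implies that there are no bad vertices at all (`not_bad_of_free`). Now
the whole vertex set is linked, and the seeds can be closed up (`Linked.claimIneq`).

The partition is encoded by a colouring `c : V → Bool`, which makes both classes symmetric. The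
cycles are chosen greedily in `containsCopy_of_petals`.
-/

set_option linter.unusedSectionVars false

open SimpleGraph

/-- For `x ∈ A` (one class of the partition `A ∪ B`), the quantity
`deg_{G[A]}(x) + ν(G[A] - N_{G[A]}[x]) + ν(G[E_B(x)])` is at most `k - 1`, where
`E_B(x)` is the set of edges inside `B` with at least one endpoint adjacent to `x`. -/
def ClaimIneq {V : Type*} (G : SimpleGraph V) (A B : Set V) (k : ℕ) : Prop :=
  ∀ x ∈ A,
    degIn G A x +
      nuSet {e | e ∈ inEdges G A ∧ ∀ v ∈ e, v ≠ x ∧ v ∉ G.neighborSet x} +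
      nuSet {e | e ∈ inEdges G B ∧ ∃ v ∈ e, G.Adj x v} ≤ k - 1

/-! ### Petals and flowers -/

section Petals

variable {V : Type*}

/-- A petal at `x` avoiding `F`: an enumeration of the `q - 1` vertices other than `x` of a
`q`-cycle of `G` through `x`, none of them in `F`. -/
def IsPetal (G : SimpleGraph V) (q : ℕ) (x : V) (F : Finset V) (p : Fin (q - 1) → V) : Prop :=
  Function.Injective p ∧ (∀ j, p j ≠ x ∧ p j ∉ F) ∧
    (∀ j j' : Fin (q - 1), (j' : ℕ) = (j : ℕ) + 1 → G.Adj (p j) (p j')) ∧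
    (∀ j : Fin (q - 1), (j : ℕ) = 0 ∨ (j : ℕ) = q - 2 → G.Adj x (p j))

lemma IsPetal.of_walk {G : SimpleGraph V} {q : ℕ} (hq : 2 ≤ q) {x y z : V} {F : Finset V}
    (w : G.Walk y z) (hw : w.IsPath) (hl : w.length = q - 2) (hy : G.Adj x y) (hz : G.Adj x z)
    (hF : ∀ v ∈ w.support, v ≠ x ∧ v ∉ F) : ∃ p, IsPetal G q x F p := by
  refine ⟨fun j => w.getVert j, ?_, ?_, ?_, ?_⟩
  · intro a b hab
    have := hw.getVert_injOn (x₁ := (a : ℕ)) (x₂ := (b : ℕ))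
      (by simp; omega) (by simp; omega) hab
    exact Fin.ext this
  · intro j
    exact hF _ (w.getVert_mem_support _)
  · intro j j' h
    simp only [h]
    exact w.adj_getVert_succ (by omega)
  · rintro j (h | h)
    · simp only [h]
      simpa using hy
    · simp only [h, ← hl]
      simpa using hz

/-- Petals can be collected greedily: if to each of `k` indices belongs a small seed, the seeds
being disjoint, and a petal exists that avoids any prescribed bounded set disjoint from the
seed, then `k` petals can be chosen disjointly. The avoided set consists of the petals already
chosen and of the other seeds. -/
lemma containsCopy_of_petals {G : SimpleGraph V} {k q K : ℕ} (hq : 1 ≤ q) {x : V}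
    {ι : Type*} [Fintype ι] (hι : k ≤ Fintype.card ι) (s : ι → Finset V)
    (hs : Pairwise fun i j => Disjoint (s i) (s j)) (hs2 : ∀ i, (s i).card ≤ 2)
    (hK : k * (q + 1) ≤ K)
    (hp : ∀ i, ∀ F : Finset V, F.card ≤ K → Disjoint F (s i) → ∃ p, IsPetal G q x F p) :
    ContainsCopy (Ckq k q) G := by
  classical
  obtain ⟨f⟩ : Nonempty (Fin k ↪ ι) :=
    Function.Embedding.nonempty_of_card_le (by simpa using hι)
  have key : ∀ T : Finset (Fin k), ∃ C : Fin k → Fin (q - 1) → V,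
      (∀ i ∈ T, IsPetal G q x ∅ (C i) ∧ ∀ j, j ≠ i → ∀ a, C i a ∉ s (f j)) ∧
      ∀ i ∈ T, ∀ j ∈ T, i ≠ j → ∀ a b, C i a ≠ C j b := by
    intro T
    induction T using Finset.induction_on with
    | empty =>
      by_cases hne : Nonempty (Fin k → Fin (q - 1) → V)
      · exact ⟨hne.some, by simp, by simp⟩
      · rcases isEmpty_or_nonempty (Fin k) with h | ⟨⟨i⟩⟩
        · exact absurd ⟨fun i => h.elim i⟩ hne
        · obtain ⟨p, -⟩ := hp (f i) ∅ (by simp) (by simp)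
          exact absurd ⟨fun _ => p⟩ hne
    | insert i T hi ih =>
      obtain ⟨C, hC, hCC⟩ := ih
      set F : Finset V := (T.biUnion fun j => Finset.univ.image (C j)) ∪
        ((Finset.univ.erase i).biUnion fun j => s (f j)) with hFdef
      have hFmem1 : ∀ j ∈ T, ∀ a, C j a ∈ F := by
        intro j hj a
        simp only [hFdef, Finset.mem_union, Finset.mem_biUnion, Finset.mem_image]
        exact Or.inl ⟨j, hj, a, by simp, rfl⟩
      have hFmem2 : ∀ j, j ≠ i → ∀ v ∈ s (f j), v ∈ F := by
        intro j hj v hv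
        simp only [hFdef, Finset.mem_union, Finset.mem_biUnion]
        exact Or.inr ⟨j, by simp [hj], hv⟩
      have hcard : F.card ≤ K := by
        refine (Finset.card_union_le _ _).trans (le_trans ?_ hK)
        have h1 : (T.biUnion fun j => Finset.univ.image (C j)).card ≤ T.card * (q - 1) :=
          Finset.card_biUnion_le_card_mul _ _ _ fun j _ =>
            Finset.card_image_le.trans (by simp)
        have h2 : ((Finset.univ.erase i).biUnion fun j => s (f j)).card ≤
            (Finset.univ.erase i).card * 2 :=
          Finset.card_biUnion_le_card_mul _ _ _ fun j _ => hs2 _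
        have h3 : T.card ≤ k := by simpa using Finset.card_le_univ T
        have h4 : (Finset.univ.erase i).card ≤ k := by
          simp
        obtain ⟨r, rfl⟩ : ∃ r, q = r + 1 := ⟨q - 1, by omega⟩
        simp only [Nat.add_sub_cancel] at h1
        nlinarith [Nat.mul_le_mul_right r h3]
      have hdisj : Disjoint F (s (f i)) := by
        rw [Finset.disjoint_left]
        intro v hv hv'
        simp only [hFdef, Finset.mem_union, Finset.mem_biUnion, Finset.mem_image] at hv
        rcases hv with ⟨j, hj, a, -, rfl⟩ | ⟨j, hj, hvj⟩
        · exact (hC j hj).2 i (by rintro rfl; exact hi hj) a hv'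
        · have hji : j ≠ i := by simpa using hj
          exact Finset.disjoint_left.1 (hs (f.injective.ne hji)) hvj hv'
      obtain ⟨p, hp1, hp2, hp3, hp4⟩ := hp (f i) F hcard hdisj
      refine ⟨Function.update C i p, ?_, ?_⟩
      · intro j hj
        rcases Finset.mem_insert.1 hj with rfl | hjT
        · simp only [Function.update_self]
          exact ⟨⟨hp1, fun a => ⟨(hp2 a).1, by simp⟩, hp3, hp4⟩,
            fun l hl a ha => (hp2 a).2 (hFmem2 l hl _ ha)⟩
        · have hji : j ≠ i := by rintro rfl; exact hi hjT
          simpa only [Function.update_of_ne hji] using hC j hjT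
      · intro j hj l hl hjl a b
        rcases Finset.mem_insert.1 hj with rfl | hjT <;>
          rcases Finset.mem_insert.1 hl with rfl | hlT
        · exact absurd rfl hjl
        · rw [Function.update_self, Function.update_of_ne hjl.symm]
          intro h
          exact (hp2 a).2 (h ▸ hFmem1 l hlT b)
        · rw [Function.update_self, Function.update_of_ne hjl]
          intro h
          exact (hp2 b).2 (h ▸ hFmem1 j hjT a)
        · have hji : j ≠ i := by rintro rfl; exact hi hjT
          have hli : l ≠ i := by rintro rfl; exact hi hlT
          rw [Function.update_of_ne hji, Function.update_of_ne hli]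
          exact hCC j hjT l hlT hjl a b
  obtain ⟨C, hC, hCC⟩ := key Finset.univ
  have hrel : ∀ u v, CkqRel k q u v →
      G.Adj (u.elim x fun t => C t.1 t.2) (v.elim x fun t => C t.1 t.2) := by
    rintro (_ | ⟨i, j⟩) (_ | ⟨i', j'⟩) h
    · exact h.elim
    · exact (hC i' (by simp)).1.2.2.2 j' h
    · exact h.elim
    · obtain ⟨rfl, h⟩ := h
      exact (hC i (by simp)).1.2.2.1 j j' h
  refine ⟨⟨fun u => u.elim x fun t => C t.1 t.2, ?_⟩, ?_⟩
  · intro u v huv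
    rw [Ckq, SimpleGraph.fromRel_adj] at huv
    rcases huv.2 with h | h
    · exact hrel _ _ h
    · exact (hrel _ _ h).symm
  · rintro (_ | ⟨i, j⟩) (_ | ⟨i', j'⟩) h
    · rfl
    · exact absurd h.symm ((hC i' (by simp)).1.2.1 j').1
    · exact absurd h ((hC i (by simp)).1.2.1 j).1
    · have h' : C i j = C i' j' := h
      by_cases hii : i = i'
      · subst hii
        rw [(hC i (by simp)).1.1 h']
      · exact absurd h' (hCC i (by simp) i' (by simp) hii j j')

end Petals

/-! ### Paths in a dense bipartite graph -/

section Paths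

variable {V : Type*}

/-- With respect to the 2-colouring `c`, any two vertices of `S` of the same colour (possibly
equal) have a common neighbour in `S`, of the other colour, outside any prescribed set of at most
`K` vertices. -/
def Linked (G : SimpleGraph V) (c : V → Bool) (S : Set V) (K : ℕ) : Prop :=
  ∀ F : Finset V, F.card ≤ K → ∀ u ∈ S, ∀ v ∈ S, c u = c v →
    ∃ w ∈ S, c w = !(c u) ∧ w ∉ F ∧ G.Adj u w ∧ G.Adj v w

variable [DecidableEq V] {G : SimpleGraph V} {c : V → Bool} {S : Set V} {K : ℕ}

/-- The workhorse: a path of any odd length from `v` to a neighbour of a vertex `t` of the same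
colour as `v`. -/
lemma Linked.exists_path (hL : Linked G c S K) (m : ℕ) : ∀ (F : Finset V) (v t : V),
    v ∈ S → t ∈ S → c v = c t → v ∉ F → F.card + 2 * m + 2 ≤ K →
    ∃ z, ∃ w : G.Walk v z, w.IsPath ∧ w.length = 2 * m + 1 ∧ G.Adj t z ∧
      ∀ u ∈ w.support, u ∉ F := by
  induction m with
  | zero =>
    intro F v t hv ht hc hvF hK
    obtain ⟨z, -, -, hzF, hvz, htz⟩ := hL F (by omega) v hv t ht hc
    refine ⟨z, .cons hvz .nil, ?_, by simp, htz, ?_⟩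
    · simp [SimpleGraph.Walk.cons_isPath_iff, hvz.ne]
    · simp [hvF, hzF]
  | succ m ih =>
    intro F v t hv ht hc hvF hK
    obtain ⟨a, haS, hca, haF, hva, -⟩ := hL F (by omega) v hv v hv rfl
    obtain ⟨b, hbS, hcb, hbF, hab, -⟩ := hL (insert v F)
      ((Finset.card_insert_le _ _).trans (by omega)) a haS a haS rfl
    simp only [Finset.mem_insert, not_or] at hbF
    obtain ⟨z, w, hw, hl, htz, hwF⟩ := ih (insert a (insert v F)) b t hbS ht
      (by simp [hcb, hca, hc])
      (by simp only [Finset.mem_insert, not_or]; exact ⟨hab.ne', hbF⟩)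
      (by
        have h1 := Finset.card_insert_le a (insert v F)
        have h2 := Finset.card_insert_le v F
        omega)
    simp only [Finset.mem_insert, not_or] at hwF
    refine ⟨z, .cons hva (.cons hab w), ?_, ?_, htz, ?_⟩
    · simp only [SimpleGraph.Walk.cons_isPath_iff, SimpleGraph.Walk.support_cons, List.mem_cons,
        not_or]
      exact ⟨⟨hw, fun h => (hwF a h).1 rfl⟩, hva.ne, fun h => (hwF v h).2.1 rfl⟩
    · simp [hl]; ring
    · simp only [SimpleGraph.Walk.support_cons, List.mem_cons]
      rintro u (rfl | rfl | hu)
      · exact hvF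
      · exact haF
      · exact (hwF u hu).2.2
/-- A petal at `x` through two neighbours `y`, `z` of `x` of different colours; here `x` itself
need not lie in `S`. -/
lemma Linked.petal_of_bichromatic (hL : Linked G c S K) (m : ℕ) {x y z : V} {F : Finset V}
    (hyS : y ∈ S) (hzS : z ∈ S) (hc : c z = !(c y)) (hxy : G.Adj x y) (hxz : G.Adj x z)
    (hyF : y ∉ F) (hzF : z ∉ F) (hK : F.card + 2 * m + 8 ≤ K) :
    ∃ p, IsPetal G (2 * m + 5) x F p := by
  have h1 := Finset.card_insert_le x F
  have h2 := Finset.card_insert_le y (insert x F)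
  have h3 := Finset.card_insert_le z (insert y (insert x F))
  obtain ⟨w, hwS, hcw, hwF, hyw, -⟩ := hL (insert z (insert y (insert x F))) (by omega) y hyS y
    hyS rfl
  obtain ⟨z', R, hR, hl, hzz', hRF⟩ := hL.exists_path m (insert z (insert y (insert x F))) w z
    hwS hzS (by rw [hcw, hc]) hwF (by omega)
  simp only [Finset.mem_insert, not_or] at hRF
  have hyz : y ≠ z := by rintro rfl; simp at hc
  refine IsPetal.of_walk (by omega) (.cons hzz' (SimpleGraph.Walk.cons hyw R).reverse) ?_ ?_
    hxz hxy ?_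
  · rw [SimpleGraph.Walk.cons_isPath_iff, SimpleGraph.Walk.isPath_reverse_iff,
      SimpleGraph.Walk.cons_isPath_iff, SimpleGraph.Walk.support_reverse, List.mem_reverse,
      SimpleGraph.Walk.support_cons, List.mem_cons, not_or]
    exact ⟨⟨hR, fun h => (hRF y h).2.1 rfl⟩, hyz.symm, fun h => (hRF z h).1 rfl⟩
  · simp [hl]
  · intro v hv
    rw [SimpleGraph.Walk.support_cons, SimpleGraph.Walk.support_reverse, List.mem_cons,
      List.mem_reverse, SimpleGraph.Walk.support_cons, List.mem_cons] at hv
    rcases hv with rfl | rfl | hv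
    · exact ⟨hxz.ne', hzF⟩
    · exact ⟨hxy.ne', hyF⟩
    · exact (hRF v hv).2.2

/-- A petal at `x` through a neighbour `y` of the same colour. -/
lemma Linked.petal_of_neighbor (hL : Linked G c S K) (hS : ∀ v, v ∈ S) (m : ℕ) {x y : V}
    {F : Finset V} (hc : c y = c x) (hxy : G.Adj x y) (hyF : y ∉ F)
    (hK : F.card + 2 * m + 8 ≤ K) : ∃ p, IsPetal G (2 * m + 5) x F p := by
  have h1 := Finset.card_insert_le x F
  obtain ⟨z, R, hR, hl, hxz, hRF⟩ := hL.exists_path (m + 1) (insert x F) y x (hS _) (hS _) hc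
    (by simp [hyF, hxy.ne']) (by omega)
  simp only [Finset.mem_insert, not_or] at hRF
  exact IsPetal.of_walk (by omega) R hR (by omega) hxy hxz hRF

/-- A petal at `x` through an edge `uv` whose ends have the colour of `x`, reached from `x` via
a vertex of the other colour. -/
lemma Linked.petal_of_same_edge (hL : Linked G c S K) (hS : ∀ v, v ∈ S) (m : ℕ) {x u v : V}
    {F : Finset V} (hcu : c u = c x) (hcv : c v = c x) (huv : G.Adj u v) (hux : u ≠ x)
    (hvx : v ≠ x) (huF : u ∉ F) (hvF : v ∉ F) (hK : F.card + 2 * m + 8 ≤ K) :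
    ∃ p, IsPetal G (2 * m + 5) x F p := by
  obtain ⟨w, -, hcw, hwF, huw, hxw⟩ := hL F (by omega) u (hS _) x (hS _) hcu
  have hvw : v ≠ w := by rintro rfl; simp [hcv, hcu] at hcw
  have h1 := Finset.card_insert_le x F
  have h2 := Finset.card_insert_le u (insert x F)
  have h3 := Finset.card_insert_le w (insert u (insert x F))
  obtain ⟨z, R, hR, hl, hxz, hRF⟩ := hL.exists_path m (insert w (insert u (insert x F))) v x
    (hS _) (hS _) hcv (by simp [hvw, huv.ne', hvx, hvF]) (by omega)
  simp only [Finset.mem_insert, not_or] at hRF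
  refine IsPetal.of_walk (by omega) (.cons huw.symm (.cons huv R)) ?_ ?_ hxw hxz ?_
  · simp only [SimpleGraph.Walk.cons_isPath_iff, SimpleGraph.Walk.support_cons, List.mem_cons,
      not_or]
    exact ⟨⟨hR, fun h => (hRF u h).2.1 rfl⟩, huw.ne', fun h => (hRF w h).1 rfl⟩
  · simp [hl]
  · intro a ha
    simp only [SimpleGraph.Walk.support_cons, List.mem_cons] at ha
    rcases ha with rfl | rfl | ha
    · exact ⟨hxw.ne', hwF⟩
    · exact ⟨hux, huF⟩
    · exact (hRF a ha).2.2

/-- A petal at `x` through an edge `uv` whose ends have the other colour, with `u` adjacent to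
`x`. -/
lemma Linked.petal_of_other_edge (hL : Linked G c S K) (hS : ∀ v, v ∈ S) (m : ℕ) {x u v : V}
    {F : Finset V} (hcu : c u = !(c x)) (hcv : c v = !(c x)) (huv : G.Adj u v)
    (hxu : G.Adj x u) (huF : u ∉ F) (hvF : v ∉ F) (hK : F.card + 2 * m + 8 ≤ K) :
    ∃ p, IsPetal G (2 * m + 5) x F p := by
  have h1 := Finset.card_insert_le x F
  have h2 := Finset.card_insert_le u (insert x F)
  have h3 := Finset.card_insert_le v (insert u (insert x F))
  have hvx : v ≠ x := by rintro rfl; simp at hcv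
  obtain ⟨w, -, hcw, hwF, hvw, -⟩ := hL (insert v (insert u (insert x F))) (by omega) v (hS _) v
    (hS _) rfl
  obtain ⟨z, R, hR, hl, hxz, hRF⟩ := hL.exists_path m (insert v (insert u (insert x F))) w x
    (hS _) (hS _) (by simp [hcw, hcv]) hwF (by omega)
  simp only [Finset.mem_insert, not_or] at hRF
  refine IsPetal.of_walk (by omega) (.cons huv (.cons hvw R)) ?_ ?_ hxu hxz ?_
  · simp only [SimpleGraph.Walk.cons_isPath_iff, SimpleGraph.Walk.support_cons, List.mem_cons,
      not_or]
    exact ⟨⟨hR, fun h => (hRF v h).1 rfl⟩, huv.ne, fun h => (hRF u h).2.1 rfl⟩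
  · simp [hl]
  · intro a ha
    simp only [SimpleGraph.Walk.support_cons, List.mem_cons] at ha
    rcases ha with rfl | rfl | ha
    · exact ⟨hxu.ne', huF⟩
    · exact ⟨hvx, hvF⟩
    · exact (hRF a ha).2.2

end Paths

/-! ### Flowers from large local structures -/

section Flowers

variable {V : Type*} [Fintype V]

lemma exists_matching_card_eq_nuSet (E : Set (Sym2 V)) : ∃ M : Finset (Sym2 V), ↑M ⊆ E ∧
    (M : Set (Sym2 V)).Pairwise (fun e f => ∀ v, v ∈ e → v ∉ f) ∧ M.card = nuSet E := by
  classical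
  have : nuSet E ∈ {m | ∃ M : Finset (Sym2 V), ↑M ⊆ E ∧
      (M : Set (Sym2 V)).Pairwise (fun e f => ∀ v, v ∈ e → v ∉ f) ∧ M.card = m} := by
    refine Nat.sSup_mem ⟨0, ∅, by simp, by simp, by simp⟩ ⟨Fintype.card (Sym2 V), ?_⟩
    rintro _ ⟨M, -, -, rfl⟩
    exact Finset.card_le_univ M
  exact this

/-- When all vertices are linked, a violation of the bound at `x` yields `k` seeds (neighbours of
`x` and matching edges), hence a copy of `C_{k,q}` centred at `x`. -/
lemma Linked.claimIneq {G : SimpleGraph V} {c : V → Bool} {S : Set V} {K k m : ℕ}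
    (hL : Linked G c S K) (hS : ∀ v, v ∈ S)
    (hK : k * (2 * m + 6) + 2 * m + 8 ≤ K) (hfree : ¬ ContainsCopy (Ckq k (2 * m + 5)) G)
    {A B : Set V} {i : Bool} (hA : ∀ v, v ∈ A ↔ c v = i) (hB : ∀ v, v ∈ B ↔ c v = !i) :
    ClaimIneq G A B k := by
  classical
  intro x hx
  obtain rfl := (hA x).1 hx
  obtain ⟨M₁, hM₁, hd₁, hc₁⟩ := exists_matching_card_eq_nuSet
    {e | e ∈ inEdges G A ∧ ∀ v ∈ e, v ≠ x ∧ v ∉ G.neighborSet x}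
  obtain ⟨M₂, hM₂, hd₂, hc₂⟩ := exists_matching_card_eq_nuSet
    {e | e ∈ inEdges G B ∧ ∃ v ∈ e, G.Adj x v}
  set D : Finset V := (G.neighborSet x ∩ A).toFinset with hD
  have hDc : D.card = degIn G A x := by rw [hD, degIn, Set.ncard_eq_toFinset_card']
  rw [← hc₁, ← hc₂, ← hDc]
  by_contra hlt
  apply hfree
  have hDm : ∀ v ∈ D, G.Adj x v ∧ c v = c x := by
    intro v hv
    simpa [hD, hA] using hv
  have hm₁ : ∀ e ∈ M₁, ∀ v ∈ e, c v = c x ∧ v ≠ x ∧ ¬ G.Adj x v := by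
    intro e he v hv
    have := hM₁ he
    exact ⟨(hA v).1 (this.1.2 v hv), (this.2 v hv).1, (this.2 v hv).2⟩
  have hm₂ : ∀ e ∈ M₂, ∀ v ∈ e, c v = !(c x) := by
    intro e he v hv
    exact (hB v).1 ((hM₂ he).1.2 v hv)
  refine containsCopy_of_petals (K := k * (2 * m + 6)) (by omega) (x := x)
    (ι := D ⊕ M₁ ⊕ M₂) (by simp; omega)
    (Sum.elim (fun y => {y.1}) (Sum.elim (fun e => e.1.toFinset) fun e => e.1.toFinset))
    ?_ ?_ le_rfl ?_
  · rintro (⟨y, hy⟩ | ⟨e, he⟩ | ⟨e, he⟩) (⟨y', hy'⟩ | ⟨e', he'⟩ | ⟨e', he'⟩) hne <;>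
      simp only [Sum.elim_inl, Sum.elim_inr, Finset.disjoint_left, Finset.mem_singleton,
        Sym2.mem_toFinset]
    · rintro v rfl rfl; exact hne rfl
    · rintro v rfl h; exact (hm₁ _ he' _ h).2.2 (hDm _ hy).1
    · rintro v rfl h; have := hm₂ _ he' _ h; simp [(hDm _ hy).2] at this
    · rintro v h rfl; exact (hm₁ _ he _ h).2.2 (hDm _ hy').1
    · intro v; exact hd₁ he he' (by rintro rfl; exact hne rfl) v
    · intro v h h'; have := hm₂ _ he' _ h'; simp [(hm₁ _ he _ h).1] at this
    · rintro v h rfl; have := hm₂ _ he _ h; simp [(hDm _ hy').2] at this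
    · intro v h h'; have := hm₂ _ he _ h; simp [(hm₁ _ he' _ h').1] at this
    · intro v; exact hd₂ he he' (by rintro rfl; exact hne rfl) v
  · rintro (⟨y, hy⟩ | ⟨e, he⟩ | ⟨e, he⟩)
    · simp
    · simp only [Sum.elim_inl, Sum.elim_inr, Sym2.card_toFinset]; split_ifs <;> simp
    · simp only [Sum.elim_inr, Sym2.card_toFinset]; split_ifs <;> simp
  · rintro (⟨y, hy⟩ | ⟨e, he⟩ | ⟨e, he⟩) F hFK hF <;>
      simp only [Sum.elim_inl, Sum.elim_inr, Finset.disjoint_right, Finset.mem_singleton,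
        Sym2.mem_toFinset] at hF
    · exact hL.petal_of_neighbor hS m (hDm y hy).2 (hDm y hy).1 (hF rfl) (by omega)
    · induction e using Sym2.ind with
      | h u v =>
        obtain ⟨hu, hux, -⟩ := hm₁ _ he u (by simp)
        obtain ⟨hv, hvx, -⟩ := hm₁ _ he v (by simp)
        exact hL.petal_of_same_edge hS m hu hv (hM₁ he).1.1 hux hvx (hF (by simp)) (hF (by simp))
          (by omega)
    · induction e using Sym2.ind with
      | h u v =>
        have hu := hm₂ _ he u (by simp)
        have hv := hm₂ _ he v (by simp)
        have huv : G.Adj u v := (hM₂ he).1.1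
        have huF : u ∉ F := hF (by simp)
        have hvF : v ∉ F := hF (by simp)
        obtain ⟨w, hw, hxw⟩ := (hM₂ he).2
        rcases Sym2.mem_iff.1 hw with rfl | rfl
        · exact hL.petal_of_other_edge hS m hu hv huv hxw huF hvF (by omega)
        · exact hL.petal_of_other_edge hS m hv hu huv.symm hxw hvF huF (by omega)

/-- If `x` has `k` neighbours of each colour in `S`, then pairing them up gives a copy of
`C_{k,q}` centred at `x`. -/
lemma Linked.containsCopy {G : SimpleGraph V} {c : V → Bool} {S : Set V} {K k m : ℕ}
    (hL : Linked G c S K) (hK : k * (2 * m + 6) + 2 * m + 8 ≤ K) {x : V}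
    {Y Z : Finset V} (hY : k ≤ Y.card) (hZ : k ≤ Z.card)
    (hY' : ∀ y ∈ Y, y ∈ S ∧ G.Adj x y ∧ c y = c x)
    (hZ' : ∀ z ∈ Z, z ∈ S ∧ G.Adj x z ∧ c z = !(c x)) :
    ContainsCopy (Ckq k (2 * m + 5)) G := by
  classical
  obtain ⟨f⟩ : Nonempty (Fin k ↪ Y) := Function.Embedding.nonempty_of_card_le (by simpa using hY)
  obtain ⟨g⟩ : Nonempty (Fin k ↪ Z) := Function.Embedding.nonempty_of_card_le (by simpa using hZ)
  have hfg : ∀ i j, (f i : V) ≠ g j := by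
    intro i j h
    have h1 := (hY' _ (f i).2).2.2
    have h2 := (hZ' _ (g j).2).2.2
    rw [h, h2] at h1
    simp at h1
  refine containsCopy_of_petals (K := k * (2 * m + 6)) (by omega) (x := x)
    (ι := Fin k) (by simp) (fun i => {(f i : V), (g i : V)}) ?_ (fun i => Finset.card_le_two)
    le_rfl ?_
  · intro i j hij
    simp [hij.symm, hfg, (hfg _ _).symm]
  · intro i F hFK hF
    simp only [Finset.disjoint_insert_right, Finset.disjoint_singleton_right] at hF
    obtain ⟨hy, hxy, hcy⟩ := hY' _ (f i).2
    obtain ⟨hz, hxz, hcz⟩ := hZ' _ (g i).2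
    exact hL.petal_of_bichromatic m hy hz (by rw [hcz, hcy]) hxy hxz hF.1 hF.2 (by omega)

end Flowers
/-! ### Counting -/

section Counting

variable {V : Type*} [Fintype V] [DecidableEq V]

lemma edgesBetween_comm (G : SimpleGraph V) (A B : Set V) :
    edgesBetween G A B = edgesBetween G B A := by
  have : ∀ A B : Set V, crossEdges G A B ⊆ crossEdges G B A := by
    rintro A B e ⟨he, u, hu, v, hv, rfl⟩
    exact ⟨he, v, hv, u, hu, Sym2.eq_swap⟩
  exact congrArg Set.ncard ((this A B).antisymm (this B A))

lemma edgesBetween_eq_sum (G : SimpleGraph V) [DecidableRel G.Adj] {A B : Finset V}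
    (h : Disjoint A B) :
    edgesBetween G (A : Set V) B = ∑ v ∈ A, (B.filter fun w => G.Adj v w).card := by
  have hset : crossEdges G (A : Set V) B =
      (((A ×ˢ B).filter fun p => G.Adj p.1 p.2).image fun p => s(p.1, p.2) :
        Finset (Sym2 V)) := by
    ext e
    simp only [crossEdges, Set.mem_ofPred_eq, Finset.coe_image, Set.mem_image, Finset.mem_coe,
      Finset.mem_filter, Finset.mem_product, Prod.exists]
    constructor
    · rintro ⟨he, u, hu, v, hv, rfl⟩
      exact ⟨u, v, ⟨⟨hu, hv⟩, he⟩, rfl⟩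
    · rintro ⟨u, v, ⟨⟨hu, hv⟩, he⟩, rfl⟩
      exact ⟨he, u, hu, v, hv, rfl⟩
  rw [edgesBetween, hset, Set.ncard_coe_finset, Finset.card_image_of_injOn]
  · rw [← Finset.card_sigma]
    refine Finset.card_bij' (fun p _ => ⟨p.1, p.2⟩) (fun p _ => (p.1, p.2)) ?_ ?_ ?_ ?_
    · rintro ⟨a, b⟩; simp; tauto
    · rintro ⟨a, b⟩; simp; tauto
    · rintro ⟨a, b⟩ _; rfl
    · rintro ⟨a, b⟩ _; rfl
  · rintro ⟨a, b⟩ hp ⟨a', b'⟩ hp' he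
    simp only [Finset.coe_filter, Finset.mem_product, Set.mem_ofPred_eq] at hp hp'
    rcases Sym2.eq_iff.1 he with ⟨rfl, rfl⟩ | ⟨rfl, rfl⟩
    · rfl
    · exact absurd hp'.1.2 (Finset.disjoint_left.1 h hp.1.1)

/-- In a maximum cut no vertex has more neighbours in its own class than in the other one. -/
lemma card_le_of_maxCut (G : SimpleGraph V) [DecidableRel G.Adj] {A B : Finset V}
    (hU : A ∪ B = Finset.univ) (hd : Disjoint A B)
    (hmax : ∀ W₀ W₁ : Set V, W₀ ∪ W₁ = Set.univ → Disjoint W₀ W₁ →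
      edgesBetween G W₀ W₁ ≤ edgesBetween G (A : Set V) B) {x : V} (hx : x ∈ A) :
    (A.filter fun w => G.Adj x w).card ≤ (B.filter fun w => G.Adj x w).card := by
  have hxB : x ∉ B := Finset.disjoint_left.1 hd hx
  have hd' : Disjoint (A.erase x) (insert x B) := by
    rw [Finset.disjoint_left]
    intro v hv hv'
    rcases Finset.mem_insert.1 hv' with rfl | hv'
    · simp at hv
    · exact Finset.disjoint_left.1 hd (Finset.mem_of_mem_erase hv) hv'
  have hU' : A.erase x ∪ insert x B = Finset.univ := by
    ext v
    have hv : v ∈ A ∪ B := by rw [hU]; simp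
    rw [Finset.mem_union] at hv
    simp only [Finset.mem_union, Finset.mem_erase, Finset.mem_insert, Finset.mem_univ, iff_true]
    tauto
  have h := hmax (A.erase x : Finset V) (insert x B : Finset V)
    (by rw [← Finset.coe_union, hU']; simp) (Finset.disjoint_coe.2 hd')
  rw [edgesBetween_eq_sum G hd', edgesBetween_eq_sum G hd, ← Finset.add_sum_erase A _ hx] at h
  have hstep : ∀ v ∈ A.erase x, ((insert x B).filter fun w => G.Adj v w).card =
      (B.filter fun w => G.Adj v w).card + if G.Adj x v then 1 else 0 := by
    intro v _
    rw [Finset.filter_insert]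
    by_cases hvx : G.Adj v x
    · rw [if_pos hvx, if_pos hvx.symm, Finset.card_insert_of_notMem (by simp [hxB])]
    · rw [if_neg hvx, if_neg (fun h => hvx h.symm)]; rfl
  rw [Finset.sum_congr rfl hstep, Finset.sum_add_distrib, ← Finset.card_filter,
    Finset.filter_erase, Finset.erase_eq_of_notMem (s := A.filter fun w => G.Adj x w)
      (by simp)] at h
  omega

lemma ncard_edgeSet_le (G : SimpleGraph V) {A B : Set V} (hU : A ∪ B = Set.univ) :
    G.edgeSet.ncard ≤ edgesBetween G A B + (edgesIn G A + edgesIn G B) := by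
  have hsub : G.edgeSet ⊆ crossEdges G A B ∪ (inEdges G A ∪ inEdges G B) := by
    intro e he
    induction e using Sym2.ind with
    | h u v =>
      have hu : u ∈ A ∪ B := by rw [hU]; trivial
      have hv : v ∈ A ∪ B := by rw [hU]; trivial
      rcases hu with hu | hu <;> rcases hv with hv | hv
      · exact Or.inr (Or.inl ⟨he, by simp [hu, hv]⟩)
      · exact Or.inl ⟨he, u, hu, v, hv, rfl⟩
      · exact Or.inl ⟨he, v, hv, u, hu, Sym2.eq_swap⟩
      · exact Or.inr (Or.inr ⟨he, by simp [hu, hv]⟩)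
  calc G.edgeSet.ncard ≤ _ := Set.ncard_le_ncard hsub (Set.toFinite _)
    _ ≤ _ := Set.ncard_union_le _ _
    _ ≤ _ := by
      have := Set.ncard_union_le (inEdges G A) (inEdges G B)
      unfold edgesBetween edgesIn
      omega

variable (G : SimpleGraph V) [DecidableRel G.Adj] (c : V → Bool)

/-- The colour class `i` of the 2-colouring `c`. -/
def cls (i : Bool) : Finset V := Finset.univ.filter fun v => c v = i

/-- The vertices of the opposite colour not adjacent to `v`. -/
def missing (v : V) : Finset V := (cls c !(c v)).filter fun w => ¬ G.Adj v w

/-- The vertices of the colour `i` missing more than `|V| / 20` vertices of the other colour. -/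
def bad (i : Bool) : Finset V :=
  (cls c i).filter fun v => Fintype.card V < 20 * (missing G c v).card

variable {G c}

@[simp] lemma mem_cls {i : Bool} {v : V} : v ∈ cls c i ↔ c v = i := by simp [cls]

lemma card_cls_add (c : V → Bool) (i : Bool) :
    (cls c i).card + (cls c !i).card = Fintype.card V := by
  rw [← Finset.card_union_of_disjoint, ← Finset.card_univ]
  · congr 1
    ext v
    cases i <;> cases h : c v <;> simp [h]
  · rw [Finset.disjoint_left]
    intro v
    cases i <;> simp +contextual

lemma disjoint_cls (c : V → Bool) (i : Bool) : Disjoint (cls c i) (cls c !i) := by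
  rw [Finset.disjoint_left]
  intro v
  cases i <;> simp +contextual

/-- The number of cross pairs is at most `n² / 4`; if the number of cross edges comes within
`n² / 1600` of that, class `i` has at least `19n / 40` vertices and at most `n / 80` bad ones. -/
lemma balanced_of_many_cross {i : Bool}
    (h : 399 * Fintype.card V ^ 2 < 1600 * edgesBetween G (cls c i : Set V) (cls c !i)) :
    19 * Fintype.card V ≤ 40 * (cls c i).card ∧ 80 * (bad G c i).card ≤ Fintype.card V := by
  set n := Fintype.card V with hn
  set a := (cls c i).card with ha
  set b := (cls c !i).card with hb
  have hab : a + b = n := card_cls_add c i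
  rw [edgesBetween_eq_sum G (disjoint_cls c i)] at h
  set E := ∑ v ∈ cls c i, ((cls c !i).filter fun w => G.Adj v w).card with hE
  have hEM : E + ∑ v ∈ cls c i, (missing G c v).card = a * b := by
    rw [hE, ← Finset.sum_add_distrib, ha, ← smul_eq_mul, ← Finset.sum_const]
    refine Finset.sum_congr rfl fun v hv => ?_
    rw [missing, mem_cls.1 hv, Finset.card_filter_add_card_filter_not]
  set M := ∑ v ∈ cls c i, (missing G c v).card with hM
  have hbad : (bad G c i).card * n ≤ 20 * M := by
    rw [hM, Finset.mul_sum, ← smul_eq_mul, ← Finset.sum_const]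
    calc ∑ _v ∈ bad G c i, n ≤ ∑ v ∈ bad G c i, 20 * (missing G c v).card :=
          Finset.sum_le_sum fun v hv => (Finset.mem_filter.1 hv).2.le
      _ ≤ _ := Finset.sum_le_sum_of_subset (Finset.filter_subset _ _)
  have h4 : 4 * (a * b) ≤ n ^ 2 := by
    rw [← hab]; nlinarith [sq_nonneg ((a : ℤ) - b), four_mul_le_sq_add a b]
  have hnpos : 0 < n := by
    rcases Nat.eq_zero_or_pos n with h0 | h0
    · have : a = 0 := by omega
      simp [this] at hEM
      simp [hEM] at h
    · exact h0
  constructor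
  · by_contra hlt
    push Not at hlt
    have h1 : 399 * n ^ 2 < 1600 * (a * b) := by omega
    obtain ⟨d, hd⟩ : ∃ d, 19 * n = 40 * a + d := ⟨19 * n - 40 * a, by omega⟩
    zify at h1 hab hd
    have hb' : (b : ℤ) = n - a := by omega
    rw [hb'] at h1
    nlinarith [sq_nonneg ((n : ℤ) - 2 * a)]
  · have h1 : 1600 * M < n ^ 2 := by omega
    have h2 : 80 * (bad G c i).card * n < n * n := by nlinarith
    exact (Nat.lt_of_mul_lt_mul_right h2).le

/-- Vertices that are not bad are linked. -/
lemma linked_not_bad {K : ℕ} (hK : 80 * K ≤ Fintype.card V) (hpos : 0 < Fintype.card V)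
    (h : ∀ i, 19 * Fintype.card V ≤ 40 * (cls c i).card ∧
      80 * (bad G c i).card ≤ Fintype.card V) :
    Linked G c {v | v ∉ bad G c (c v)} K := by
  intro F hF u hu v hv huv
  by_contra hno
  push Not at hno
  have hsub : cls c (!(c u)) ⊆ bad G c (!(c u)) ∪ (F ∪ (missing G c u ∪ missing G c v)) := by
    intro w hw
    by_contra hw'
    have hcw := mem_cls.1 hw
    simp only [Finset.mem_union, not_or, missing, Finset.mem_filter, ← huv, hw, true_and,
      not_not] at hw'
    exact hno w (by simpa [hcw] using hw'.1) hcw hw'.2.1 hw'.2.2.1 hw'.2.2.2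
  have hcard := Finset.card_le_card hsub
  have h1 := Finset.card_union_le (bad G c (!(c u))) (F ∪ (missing G c u ∪ missing G c v))
  have h2 := Finset.card_union_le F (missing G c u ∪ missing G c v)
  have h3 := Finset.card_union_le (missing G c u) (missing G c v)
  have hu' : 20 * (missing G c u).card ≤ Fintype.card V := by simpa [bad] using hu
  have hv' : 20 * (missing G c v).card ≤ Fintype.card V := by simpa [bad] using hv
  have := h (!(c u))
  omega

/-- With the minimum degree and maximum cut conditions, `C_{k,q}`-freeness bounds the degrees
inside the classes by `n / 80 + k`, and then no vertex is bad. -/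
lemma not_bad_of_free {k m K : ℕ} (hKk : k * (2 * m + 6) + 2 * m + 8 ≤ K)
    (hK : 80 * K ≤ Fintype.card V)
    (h : ∀ i, 19 * Fintype.card V ≤ 40 * (cls c i).card ∧
      80 * (bad G c i).card ≤ Fintype.card V)
    (hfree : ¬ ContainsCopy (Ckq k (2 * m + 5)) G)
    (hdeg : ∀ v, Fintype.card V / 2 ≤ (G.neighborSet v).ncard)
    (hcut : ∀ v, ((cls c (c v)).filter fun w => G.Adj v w).card ≤
      ((cls c !(c v)).filter fun w => G.Adj v w).card) (x : V) :
    x ∉ bad G c (c x) := by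
  have hL := linked_not_bad (G := G) (c := c) hK (by omega) h
  set D := (cls c (c x)).filter fun w => G.Adj x w with hD
  set D' := (cls c !(c x)).filter fun w => G.Adj x w with hD'
  have hc := hcut x
  rw [← hD, ← hD'] at hc
  have hDlt : D.card < (bad G c (c x)).card + k ∨ D'.card < (bad G c !(c x)).card + k := by
    by_contra hno
    push Not at hno
    refine hfree (hL.containsCopy hKk (x := x) (Y := D \ bad G c (c x))
      (Z := D' \ bad G c !(c x)) ?_ ?_ ?_ ?_)
    · have := Finset.le_card_sdiff (bad G c (c x)) D
      omega
    · have := Finset.le_card_sdiff (bad G c !(c x)) D'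
      omega
    · intro y hy
      simp only [hD, Finset.mem_sdiff, Finset.mem_filter, mem_cls] at hy
      exact ⟨by simpa [hy.1.1] using hy.2, hy.1.2, hy.1.1⟩
    · intro z hz
      simp only [hD', Finset.mem_sdiff, Finset.mem_filter, mem_cls] at hz
      exact ⟨by simpa [hz.1.1] using hz.2, hz.1.2, hz.1.1⟩
  have hsum : (G.neighborSet x).ncard ≤ D.card + D'.card := by
    rw [← Set.ncard_coe_finset, ← Set.ncard_coe_finset]
    refine le_trans (Set.ncard_le_ncard ?_ (Set.toFinite _)) (Set.ncard_union_le _ _)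
    intro w hw
    have hw' : G.Adj x w := hw
    cases hcx : c x <;> cases hcw : c w <;> simp [hD, hD', hcx, hcw, hw']
  have hmiss : D'.card + (missing G c x).card = (cls c !(c x)).card := by
    rw [hD', missing, Finset.card_filter_add_card_filter_not]
  have hx := hdeg x
  have hcl := card_cls_add c (c x)
  have h1 := h (c x)
  have h2 := h (!(c x))
  have hkK : k + 1 ≤ K := by nlinarith [Nat.zero_le (k * m)]
  simp only [bad, Finset.mem_filter, mem_cls, true_and, not_lt]
  omega

end Counting

/-- **Claim 2.** In the standard setup (`G` a `C_{k,q}`-free graph on `n` vertices with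
`e(G) ≥ ⌊n²/4⌋ + (k-1)²`, `δ(G) ≥ ⌊n/2⌋`, `V₀ ∪ V₁` a max-cut partition with
`e(V₀) + e(V₁) < n²/1600`), for each `i` and every `x ∈ Vᵢ`:
`deg_{Gᵢ}(x) + ν(Gᵢ - N_{Gᵢ}[x]) + ν(G[E_{1-i}(x)]) ≤ k - 1`. -/
theorem local_degree_matching_bound (k q : ℕ) (hk : 2 ≤ k) (hq : 5 ≤ q) (hqodd : Odd q) :
    ∃ N : ℕ, ∀ n : ℕ, N ≤ n → ∀ G : SimpleGraph (Fin n),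
      ¬ ContainsCopy (Ckq k q) G →
      n ^ 2 / 4 + (k - 1) ^ 2 ≤ G.edgeSet.ncard →
      (∀ v, n / 2 ≤ (G.neighborSet v).ncard) →
      ∀ V₀ V₁ : Set (Fin n), V₀ ∪ V₁ = Set.univ → Disjoint V₀ V₁ →
        (∀ W₀ W₁ : Set (Fin n), W₀ ∪ W₁ = Set.univ → Disjoint W₀ W₁ →
          edgesBetween G W₀ W₁ ≤ edgesBetween G V₀ V₁) →
        ((edgesIn G V₀ + edgesIn G V₁ : ℕ) : ℝ) < (n : ℝ) ^ 2 / 1600 →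
        ClaimIneq G V₀ V₁ k ∧ ClaimIneq G V₁ V₀ k := by
  classical
  obtain ⟨m, rfl⟩ : ∃ m, q = 2 * m + 5 := by
    obtain ⟨r, rfl⟩ := hqodd
    exact ⟨r - 2, by omega⟩
  refine ⟨80 * (k * (2 * m + 6) + 2 * m + 8), fun n hn G hfree hE hdeg V₀ V₁ hU hd hmax hin => ?_⟩
  set K := k * (2 * m + 6) + 2 * m + 8 with hK
  set c : Fin n → Bool := fun v => decide (v ∈ V₀) with hc
  have hV₀ : ∀ v, v ∈ V₀ ↔ c v = true := by simp [hc]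
  have hV₁ : ∀ v, v ∈ V₁ ↔ c v = false := by
    intro v
    have hv : v ∈ V₀ ∪ V₁ := by rw [hU]; trivial
    simp only [hc, decide_eq_false_iff_not]
    exact ⟨fun h h' => Set.disjoint_left.1 hd h' h, fun h => hv.resolve_left h⟩
  have hcl₀ : (cls c true : Set (Fin n)) = V₀ := by ext v; simp [hV₀]
  have hcl₁ : (cls c false : Set (Fin n)) = V₁ := by ext v; simp [hV₁]
  have hn' : Fintype.card (Fin n) = n := Fintype.card_fin n
  have hcross : 399 * n ^ 2 < 1600 * edgesBetween G V₀ V₁ := by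
    have h1 := ncard_edgeSet_le G hU
    have h2 : 1600 * (edgesIn G V₀ + edgesIn G V₁) < n ^ 2 := by
      rw [lt_div_iff₀ (by norm_num)] at hin
      have : (edgesIn G V₀ + edgesIn G V₁) * 1600 < n ^ 2 := by exact_mod_cast hin
      omega
    have h3 : 1 ≤ (k - 1) ^ 2 := Nat.one_le_pow _ _ (by omega)
    omega
  have hbal : ∀ i, 19 * Fintype.card (Fin n) ≤ 40 * (cls c i).card ∧
      80 * (bad G c i).card ≤ Fintype.card (Fin n) := by
    intro i
    apply balanced_of_many_cross
    cases i
    · rw [Bool.not_false, hcl₀, hcl₁, edgesBetween_comm, hn']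
      exact hcross
    · rw [Bool.not_true, hcl₀, hcl₁, hn']
      exact hcross
  have hunion : ∀ i, cls c i ∪ cls c (!i) = Finset.univ := by
    intro i
    ext v
    cases i <;> cases h : c v <;> simp [h]
  have hcut : ∀ v, ((cls c (c v)).filter fun w => G.Adj v w).card ≤
      ((cls c !(c v)).filter fun w => G.Adj v w).card := by
    intro v
    refine card_le_of_maxCut G (hunion _) (disjoint_cls c _) ?_ (by simp)
    intro W₀ W₁ hW hWd
    cases c v
    · rw [Bool.not_false, hcl₀, hcl₁, edgesBetween_comm G V₁]
      exact hmax W₀ W₁ hW hWd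
    · rw [Bool.not_true, hcl₀, hcl₁]
      exact hmax W₀ W₁ hW hWd
  have hgood := not_bad_of_free hK.ge (by rw [hn']; exact hn) hbal hfree
    (by rw [hn']; exact hdeg) hcut
  have hL := linked_not_bad (G := G) (c := c) (K := K) (by rw [hn']; exact hn) (by omega) hbal
  exact ⟨hL.claimIneq hgood hK.ge hfree hV₀ hV₁, hL.claimIneq hgood hK.ge hfree hV₁ hV₀⟩
end
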